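/- arXiv:2005.12023 — 4 statements merged into one kernel-verified Lean document; each statement's English description precedes it below -/
import Mathlib

section
/- Every finite subgroup of the rotation group SO(3) is isomorphic, as an abstract group, to one of the following: a cyclic group of order n for some n ≥ 1, a dihedral group of order 2n for some n ≥ 2, the alternating group A₄ (the tetrahedral group), the symmetric group S₄ (the octahedral group), or the alternating group A₅ (the icosahedral group). -/
open Matrix

structure PoleAction (G P : Type*) [Group G] [MulAction G P] (s : P → P) : Prop where
  comm : ∀ (g : G) (p : P), g • s p = s (g • p)
  ne : ∀ p, s p ≠ p
  invol : ∀ p, s (s p) = p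
  fix : ∀ g : G, g ≠ 1 → ∃ p : P, ∀ q : P, g • q = q ↔ q = p ∨ q = s p
  cyc : ∀ p : P, IsCyclic (MulAction.stabilizer G p)
  pole : ∀ p : P, ∃ g : G, g ≠ 1 ∧ g • p = p

namespace PoleAction

open MulAction

section

variable {G P : Type*} [Group G] [MulAction G P] {s : P → P}

lemma eq_or (h : PoleAction G P s) {g : G} (hg : g ≠ 1) {p q : P} (hp : g • p = p)
    (hq : g • q = q) : q = p ∨ q = s p := by
  obtain ⟨r, hr⟩ := h.fix g hg
  have := h.invol r
  rcases (hr p).1 hp with rfl | rfl <;> rcases (hr q).1 hq with rfl | rfl <;> simp [this]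

lemma smul_s (h : PoleAction G P s) {g : G} {p : P} (hp : g • p = p) : g • s p = s p := by
  rw [h.comm, hp]

lemma card_fixedBy (h : PoleAction G P s) {g : G} (hg : g ≠ 1) :
    Nat.card (fixedBy P g) = 2 := by
  obtain ⟨r, hr⟩ := h.fix g hg
  have : fixedBy P g = {r, s r} := by
    ext q; simp [mem_fixedBy, hr]
  rw [this, Nat.card_coe_set_eq, Set.ncard_pair (h.ne r).symm]

lemma card_orbit_le (h : PoleAction G P s) {g : G} (hg : g ≠ 1) {p : P}
    (hp : ∀ k : G, g • k • p = k • p) : (orbit G p).ncard ≤ 2 := by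
  have : orbit G p ⊆ {p, s p} := by
    rintro _ ⟨k, rfl⟩
    exact h.eq_or hg (by simpa using hp 1) (hp k)
  exact (Set.ncard_le_ncard this (Set.toFinite _)).trans (Set.ncard_pair (h.ne p).symm).le

lemma orbit_mul_stab (p : P) : (orbit G p).ncard * Nat.card (stabilizer G p) = Nat.card G := by
  rw [← index_stabilizer, Subgroup.index_mul_card]

lemma two_le_stab [Finite G] (h : PoleAction G P s) (p : P) : 2 ≤ Nat.card (stabilizer G p) := by
  obtain ⟨g, hg, hp⟩ := h.pole p
  have : Nontrivial (stabilizer G p) := ⟨⟨⟨g, hp⟩, 1, by simpa [Subtype.ext_iff] using hg⟩⟩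
  exact Finite.one_lt_card

lemma burnside [Finite G] [Finite P] [Fintype (orbitRel.Quotient G P)]
    (h : PoleAction G P s) :
    ∑ ω : orbitRel.Quotient G P, (orbit G ω.out).ncard + 2 * Nat.card G
      = Fintype.card (orbitRel.Quotient G P) * Nat.card G + 2 := by
  classical
  have := Fintype.ofFinite G
  have := Fintype.ofFinite P
  have h1 := sum_card_fixedBy_eq_card_orbits_mul_card_group G P
  have h2 : Nat.card P = ∑ ω : orbitRel.Quotient G P, (orbit G ω.out).ncard := by
    rw [Nat.card_congr (selfEquivSigmaOrbits G P), Nat.card_sigma]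
    rfl
  rw [← Finset.add_sum_erase _ _ (Finset.mem_univ (1 : G))] at h1
  have h3 : ∑ x ∈ Finset.univ.erase (1 : G), Fintype.card (fixedBy P x)
      = ∑ x ∈ Finset.univ.erase (1 : G), 2 := by
    apply Finset.sum_congr rfl
    intro x hx
    rw [← Nat.card_eq_fintype_card, h.card_fixedBy (Finset.ne_of_mem_erase hx)]
  rw [h3, Finset.sum_const, Finset.card_erase_of_mem (Finset.mem_univ _), Finset.card_univ] at h1
  have h4 : Fintype.card (fixedBy P (1 : G)) = Nat.card P := by
    rw [← Nat.card_eq_fintype_card]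
    have : fixedBy P (1 : G) = Set.univ := by ext; simp
    rw [this, Nat.card_univ]
  rw [h4, h2] at h1
  have h5 : 0 < Fintype.card G := Fintype.card_pos
  rw [Nat.card_eq_fintype_card (α := G)]
  have h6 : Fintype.card (Quotient (orbitRel G P)) = Fintype.card (orbitRel.Quotient G P) := by
    apply Fintype.card_congr; rfl
  rw [h6] at h1
  simp only [smul_eq_mul] at h1
  omega

lemma dioph (N : ℕ) (a b : Fin 3 → ℕ) (hab : ∀ i, a i * b i = N) (hN : 0 < N)
    (hb : ∀ i, 2 ≤ b i) (hm : Monotone b) (hs : a 0 + a 1 + a 2 = N + 2) :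
    a 2 = 2 ∨ (b 0 = 2 ∧ b 1 = 3 ∧
      ((b 2 = 3 ∧ N = 12) ∨ (b 2 = 4 ∧ N = 24) ∨ (b 2 = 5 ∧ N = 60))) := by
  have h01 : b 0 ≤ b 1 := hm (by decide)
  have h12 : b 1 ≤ b 2 := hm (by decide)
  have h0 := hab 0
  have h1 := hab 1
  have h2 := hab 2
  have hb0 := hb 0
  generalize a 0 = x at *
  generalize a 1 = y at *
  generalize a 2 = z at *
  generalize b 0 = u at *
  generalize b 1 = v at *
  generalize b 2 = w at *
  have e0 : u = 2 := by
    by_contra hne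
    have : 3 ≤ u := by omega
    have i0 : x * 3 ≤ N := h0 ▸ Nat.mul_le_mul_left _ this
    have i1 : y * 3 ≤ N := h1 ▸ Nat.mul_le_mul_left _ (by omega)
    have i2 : z * 3 ≤ N := h2 ▸ Nat.mul_le_mul_left _ (by omega)
    omega
  subst e0
  have e1 : v = 2 ∨ v = 3 := by
    by_contra hne
    have : 4 ≤ v := by omega
    have i1 : y * 4 ≤ N := h1 ▸ Nat.mul_le_mul_left _ (by omega)
    have i2 : z * 4 ≤ N := h2 ▸ Nat.mul_le_mul_left _ (by omega)
    omega
  rcases e1 with rfl | rfl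
  · left; omega
  · right
    have : w ≤ 5 := by
      by_contra hne
      have i2 : z * 6 ≤ N := h2 ▸ Nat.mul_le_mul_left _ (by omega)
      omega
    interval_cases w <;> omega

lemma cases [Finite G] [Finite P] (h : PoleAction G P s) (hG : 2 ≤ Nat.card G) :
    (∃ p : P, (orbit G p).ncard = 1) ∨ (∃ p : P, (orbit G p).ncard = 2) ∨
    (Nat.card G = 12 ∧ ∃ p : P, (orbit G p).ncard = 4) ∨
    (Nat.card G = 24 ∧ (∃ p : P, Nat.card (stabilizer G p) = 3) ∧
      ∀ p : P, 2 < (orbit G p).ncard) ∨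
    (Nat.card G = 60 ∧ (∀ p : P, Nat.card (stabilizer G p) = 2 ∨ Nat.card (stabilizer G p) = 3 ∨
      Nat.card (stabilizer G p) = 5) ∧ (∃ p : P, Nat.card (stabilizer G p) = 2) ∧
      ∀ p q : P, Nat.card (stabilizer G p) = 2 → Nat.card (stabilizer G q) = 2 →
        q ∈ orbit G p) := by
  classical
  have := Fintype.ofFinite (orbitRel.Quotient G P)
  have hB := h.burnside
  have key : ∀ ω : orbitRel.Quotient G P, 2 * (orbit G ω.out).ncard ≤ Nat.card G := by
    intro ω
    rw [← orbit_mul_stab ω.out, mul_comm]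
    exact Nat.mul_le_mul_left _ (h.two_le_stab _)
  have key1 : ∀ ω : orbitRel.Quotient G P, 1 ≤ (orbit G ω.out).ncard := by
    intro ω
    rw [Nat.one_le_iff_ne_zero]
    intro h0
    have := orbit_mul_stab (G := G) ω.out
    rw [h0] at this
    omega
  have c1 : 2 * ∑ ω : orbitRel.Quotient G P, (orbit G ω.out).ncard
      ≤ Fintype.card (orbitRel.Quotient G P) * Nat.card G := by
    rw [Finset.mul_sum]
    refine (Finset.sum_le_sum fun ω _ => key ω).trans ?_
    simp
  have c2 : Fintype.card (orbitRel.Quotient G P)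
      ≤ ∑ ω : orbitRel.Quotient G P, (orbit G ω.out).ncard := by
    refine le_trans ?_ (Finset.sum_le_sum fun ω _ => key1 ω)
    simp
  have hr : Fintype.card (orbitRel.Quotient G P) = 2 ∨
      Fintype.card (orbitRel.Quotient G P) = 3 := by
    generalize Fintype.card (orbitRel.Quotient G P) = r at *
    generalize ∑ ω : orbitRel.Quotient G P, (orbit G ω.out).ncard = S at *
    generalize Nat.card G = N at *
    have : r < 4 := by
      by_contra hr
      have : 4 * N ≤ r * N := Nat.mul_le_mul_right _ (by omega)
      omega
    interval_cases r <;> omega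
  rcases hr with hr | hr
  · left
    let e := (Fintype.equivFinOfCardEq hr).symm
    rw [hr, ← e.sum_comp, Fin.sum_univ_two] at hB
    have := key1 (e 0)
    have := key1 (e 1)
    exact ⟨(e 0).out, by omega⟩
  · right
    let e0 := (Fintype.equivFinOfCardEq hr).symm
    let f : Fin 3 → ℕ := fun i => Nat.card (stabilizer G (e0 i).out)
    let e := (Tuple.sort f).trans e0
    have hm : Monotone (fun i => Nat.card (stabilizer G (e i).out)) := Tuple.monotone_sort f
    rw [hr, ← e.sum_comp, Fin.sum_univ_three] at hB
    have hq : ∀ q : P, ∃ i, orbit G q = orbit G (e i).out := by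
      intro q
      refine ⟨e.symm (Quotient.mk _ q), ?_⟩
      rw [Equiv.apply_symm_apply, orbit_eq_iff]
      exact orbitRel_apply.1 (Quotient.exact (Quotient.out_eq _).symm)
    have hst : ∀ q q' : P, orbit G q = orbit G q' →
        Nat.card (stabilizer G q) = Nat.card (stabilizer G q') := by
      intro q q' hqq
      have h1 := orbit_mul_stab (G := G) q
      have h2 := orbit_mul_stab (G := G) q'
      rw [← h2, hqq] at h1
      refine Nat.eq_of_mul_eq_mul_left ?_ h1
      rw [Nat.pos_iff_ne_zero]
      intro h0
      rw [h0] at h2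
      omega
    have D := dioph (Nat.card G) (fun i => (orbit G (e i).out).ncard)
      (fun i => Nat.card (stabilizer G (e i).out)) (fun i => orbit_mul_stab _) (by omega)
      (fun i => h.two_le_stab _) hm (by omega)
    rcases D with D | ⟨D0, D1, ⟨D2, DN⟩ | ⟨D2, DN⟩ | ⟨D2, DN⟩⟩
    · exact Or.inl ⟨_, D⟩
    · refine Or.inr (Or.inl ⟨DN, (e 2).out, ?_⟩)
      have := orbit_mul_stab (G := G) (e 2).out
      rw [D2, DN] at this
      omega
    · refine Or.inr (Or.inr (Or.inl ⟨DN, ⟨_, D1⟩, ?_⟩))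
      intro p
      obtain ⟨i, hi⟩ := hq p
      have h1 := orbit_mul_stab (G := G) p
      have h2 := hst _ _ hi
      rw [h2, DN] at h1
      fin_cases i <;> simp_all <;> omega
    · refine Or.inr (Or.inr (Or.inr ⟨DN, ?_, ⟨_, D0⟩, ?_⟩))
      · intro p
        obtain ⟨i, hi⟩ := hq p
        rw [hst _ _ hi]
        fin_cases i <;> simp_all
      · intro p q hp hq'
        obtain ⟨i, hi⟩ := hq p
        obtain ⟨j, hj⟩ := hq q
        rw [hst _ _ hi] at hp
        rw [hst _ _ hj] at hq'
        have hi0 : i = 0 := by fin_cases i <;> simp_all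
        have hj0 : j = 0 := by fin_cases j <;> simp_all
        rw [← orbit_eq_iff, hi, hj, hi0, hj0]

lemma cyclic [Finite G] (h : PoleAction G P s) {p : P} (hp : (orbit G p).ncard = 1) :
    ∃ n : ℕ, 1 ≤ n ∧ Nonempty (G ≃* Multiplicative (ZMod n)) := by
  rw [← index_stabilizer, Subgroup.index_eq_one] at hp
  have hc := h.cyc p
  rw [hp] at hc
  have hc' : IsCyclic G := (Subgroup.topEquiv (G := G)).isCyclic.1 hc
  exact ⟨Nat.card G, Nat.card_pos, ⟨(zmodCyclicMulEquiv hc').symm⟩⟩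

lemma dihedral [Finite G] (h : PoleAction G P s) {p : P} (hp : (orbit G p).ncard = 2) :
    ∃ n : ℕ, 2 ≤ n ∧ Nonempty (G ≃* DihedralGroup n) := by
  have hcard := orbit_mul_stab (G := G) p
  have hidx : (stabilizer G p).index = 2 := by rw [index_stabilizer, hp]
  have hnorm := Subgroup.normal_of_index_eq_two hidx
  obtain ⟨c, hc1, hcp⟩ := h.pole p
  have hout : ∀ g : G, g ∉ stabilizer G p → g • p = s p := by
    intro g hg
    have h1 : g⁻¹ * c * g ∈ stabilizer G p := by
      simpa using hnorm.conj_mem c hcp g⁻¹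
    have h2 : c • g • p = g • p := by
      have := mem_stabilizer_iff.1 h1
      rw [mul_smul, mul_smul, inv_smul_eq_iff] at this
      exact this
    rcases h.eq_or hc1 hcp h2 with h3 | h3
    · exact absurd h3 hg
    · exact h3
  have hinv : ∀ g : G, g ∉ stabilizer G p → g * g = 1 := by
    intro g hg
    by_contra hne
    have hg1 : g ≠ 1 := by rintro rfl; simp at hne
    obtain ⟨q, hq⟩ := h.fix g hg1
    have hq1 : g • q = q := (hq q).2 (Or.inl rfl)
    have e1 : (g * g) • p = p := by rw [mul_smul, hout g hg, h.comm, hout g hg, h.invol]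
    have e2 : (g * g) • q = q := by rw [mul_smul, hq1, hq1]
    rcases h.eq_or hne e1 e2 with rfl | rfl
    · exact hg hq1
    · rw [h.comm, hout g hg, h.invol] at hq1
      exact h.ne _ hq1.symm
  obtain ⟨t, ht⟩ : ∃ t : G, t ∉ stabilizer G p := by
    by_contra! hall
    have : stabilizer G p = ⊤ := by ext; simp [hall]
    rw [this] at hidx
    simp at hidx
  have ht2 := hinv t ht
  let φ := zmodCyclicMulEquiv (h.cyc p)
  have ψadd : ∀ i j, ((φ (Multiplicative.ofAdd (i + j)) : stabilizer G p) : G)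
      = φ (Multiplicative.ofAdd i) * φ (Multiplicative.ofAdd j) := by
    intro i j
    rw [ofAdd_add, map_mul]; rfl
  have ψneg : ∀ i, ((φ (Multiplicative.ofAdd (-i)) : stabilizer G p) : G)
      = (φ (Multiplicative.ofAdd i) : G)⁻¹ := by
    intro i
    rw [ofAdd_neg, map_inv]; rfl
  have hconj : ∀ x ∈ stabilizer G p, x * t = t * x⁻¹ := by
    intro x hx
    have h1 : x * t ∉ stabilizer G p := by
      rwa [Subgroup.mul_mem_cancel_left _ hx]
    have h2 := hinv _ h1
    have h3 : t⁻¹ = t := inv_eq_of_mul_eq_one_left ht2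
    calc x * t = (x * t)⁻¹ := (inv_eq_of_mul_eq_one_left h2).symm
      _ = t * x⁻¹ := by rw [_root_.mul_inv_rev, h3]
  let F : DihedralGroup (Nat.card (stabilizer G p)) → G := fun d =>
    match d with
    | .r i => φ (Multiplicative.ofAdd i)
    | .sr i => t * φ (Multiplicative.ofAdd i)
  have Fmul : ∀ a b, F (a * b) = F a * F b := by
    rintro (i | i) (j | j)
    · exact ψadd i j
    · change t * _ = _ * (t * _)
      rw [← mul_assoc, hconj _ (φ (Multiplicative.ofAdd i)).2, sub_eq_add_neg, add_comm, ψadd, ψneg,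
        mul_assoc]
    · change t * _ = t * _ * _
      rw [ψadd, mul_assoc]
    · change _ = t * _ * (t * _)
      rw [← mul_assoc, mul_assoc t, hconj _ (φ (Multiplicative.ofAdd i)).2, ← mul_assoc, ht2,
        one_mul, ← ψneg, ← ψadd, neg_add_eq_sub]
      rfl
  have Finj : Function.Injective F := by
    have hφ : ∀ i j, ((φ (Multiplicative.ofAdd i) : stabilizer G p) : G)
        = φ (Multiplicative.ofAdd j) → i = j := by
      intro i j hij
      exact Multiplicative.ofAdd.injective (φ.injective (Subtype.ext hij))
    have hne : ∀ i j, ((φ (Multiplicative.ofAdd i) : stabilizer G p) : G)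
        ≠ t * φ (Multiplicative.ofAdd j) := by
      intro i j hij
      apply ht
      have := (φ (Multiplicative.ofAdd i)).2
      rw [hij] at this
      exact (Subgroup.mul_mem_cancel_right _ (φ (Multiplicative.ofAdd j)).2).1 this
    rintro (i | i) (j | j) hij
    · rw [hφ i j hij]
    · exact absurd hij (hne i j)
    · exact absurd hij.symm (hne j i)
    · rw [hφ i j (mul_left_cancel hij)]
  have Fbij : Function.Bijective F := by
    rw [Nat.bijective_iff_injective_and_card]
    refine ⟨Finj, ?_⟩
    rw [DihedralGroup.nat_card, ← hcard, hp]
  exact ⟨_, h.two_le_stab p, ⟨(MulEquiv.ofBijective (MulHom.mk F Fmul) Fbij).symm⟩⟩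

lemma alt_of_inj {X : Type*} [Finite G] (m : ℕ) (hX : Nat.card X = m) (hm : 0 < m)
    (hG : 2 * Nat.card G = m.factorial) (f : G →* Equiv.Perm X) (hf : Function.Injective f) :
    Nonempty (G ≃* alternatingGroup (Fin m)) := by
  have : Finite X := Nat.finite_of_card_ne_zero (by omega)
  let e : X ≃ Fin m := Finite.equivFinOfCardEq hX
  let f' : G →* Equiv.Perm (Fin m) := e.permCongrHom.toMonoidHom.comp f
  have hf' : Function.Injective f' := e.permCongrHom.injective.comp hf
  have hr : f'.range = alternatingGroup (Fin m) := by
    apply Equiv.Perm.eq_alternatingGroup_of_index_eq_two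
    have h1 := Subgroup.index_mul_card f'.range
    rw [← Nat.card_congr (MonoidHom.ofInjective hf').toEquiv, Nat.card_perm, Nat.card_fin, ← hG] at h1
    exact Nat.eq_of_mul_eq_mul_right Nat.card_pos h1
  exact ⟨(MonoidHom.ofInjective hf').trans (MulEquiv.subgroupCongr hr)⟩

lemma tetra [Finite G] (h : PoleAction G P s) (hG : Nat.card G = 12) {p : P}
    (hp : (orbit G p).ncard = 4) : Nonempty (G ≃* alternatingGroup (Fin 4)) := by
  refine alt_of_inj (X := orbit G p) 4 hp (by norm_num) (by rw [hG]; rfl) (toPermHom G _) ?_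
  rw [injective_iff_map_eq_one]
  intro g hg
  by_contra hne
  have := h.card_orbit_le hne (p := p) (by
    intro k
    have := congrArg (fun f => ((f ⟨k • p, mem_orbit p k⟩ : orbit G p) : P)) hg
    simpa using this)
  omega

open scoped Pointwise in
lemma mem_sylow_smul {q : ℕ} (g x : G) (S : Sylow q G) : x ∈ g • S ↔ g⁻¹ * x * g ∈ S := by
  have : x ∈ g • S ↔ x ∈ MulAut.conj g • (S : Subgroup G) := Iff.rfl
  rw [this, Subgroup.mem_pointwise_smul_iff_inv_smul_mem]
  simp [← map_inv]
  rfl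

lemma octa [Finite G] (h : PoleAction G P s) (hG : Nat.card G = 24)
    {p : P} (hp : Nat.card (stabilizer G p) = 3) (hbig : ∀ p : P, 2 < (orbit G p).ncard) :
    Nonempty (G ≃* Equiv.Perm (Fin 4)) := by
  have : Fact (Nat.Prime 3) := ⟨Nat.prime_three⟩
  have hfac : (24 : ℕ).factorization 3 = 1 := by
    rw [show 24 = 3 ^ 1 * 8 by norm_num, Nat.factorization_mul (by norm_num) (by norm_num)]
    rw [Nat.Prime.factorization_pow Nat.prime_three]
    simp [Nat.factorization_eq_zero_of_not_dvd]
  let S : ∀ q : P, Nat.card (stabilizer G q) = 3 → Sylow 3 G := fun q hq =>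
    Sylow.ofCard (stabilizer G q) (by rw [hG, hfac, hq]; rfl)
  have hS : ∀ q hq x, x ∈ S q hq ↔ x • q = q := fun q hq x => Iff.rfl
  have hk : ∀ k : G, Nat.card (stabilizer G (k • p)) = 3 := by
    intro k
    have h1 := orbit_mul_stab (G := G) p
    have h2 := orbit_mul_stab (G := G) (k • p)
    rw [orbit_smul] at h2
    have := hbig p
    rw [← h1, hp] at h2
    exact Nat.eq_of_mul_eq_mul_left (by omega) h2
  have hact : ∀ g : G, ∀ q hq, g • S q hq = S q hq → g • q = q ∨ g • q = s q := by
    intro g q hq hg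
    obtain ⟨x, hx, hxq⟩ := h.pole q
    apply h.eq_or hx hxq
    have : x ∈ g • S q hq := by rw [hg]; exact hxq
    rw [mem_sylow_smul] at this
    replace this := (hS q hq _).1 this
    rw [mul_smul, mul_smul, inv_smul_eq_iff] at this
    exact this
  have hSp : Nat.card (Sylow 3 G) = 4 := by
    have h1 := card_sylow_modEq_one 3 G
    have h2 := (S p hp).card_dvd_index
    have h3 : (S p hp : Subgroup G).index = 8 := by
      have : (S p hp : Subgroup G).index * Nat.card (stabilizer G p) = Nat.card G :=
        Subgroup.index_mul_card _
      rw [hp, hG] at this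
      omega
    rw [h3] at h2
    have h4 : Nat.card (Sylow 3 G) ≤ 8 := Nat.le_of_dvd (by norm_num) h2
    have h5 : Nat.card (Sylow 3 G) ≠ 1 := by
      intro h5
      have := (Nat.card_eq_one_iff_unique.1 h5).1
      have hb := hbig p
      have : orbit G p ⊆ {p, s p} := by
        rintro _ ⟨k, rfl⟩
        exact hact k p hp (Subsingleton.elim _ _)
      have := (Set.ncard_le_ncard this (Set.toFinite _)).trans (Set.ncard_pair (h.ne p).symm).le
      omega
    generalize Nat.card (Sylow 3 G) = n at *
    unfold Nat.ModEq at h1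
    interval_cases n <;> omega
  let f := toPermHom G (Sylow 3 G)
  have hker : ∀ g ∈ f.ker, ∀ T : Sylow 3 G, g • T = T := by
    intro g hg T
    exact congrArg (fun f => f T) (MonoidHom.mem_ker.1 hg)
  have hsq : ∀ g ∈ f.ker, g * g = 1 := by
    intro g hg
    by_contra hne
    have := hbig p
    have := h.card_orbit_le hne (p := p) (by
      intro k
      rcases hact g (k • p) (hk k) (hker g hg _) with h1 | h1
      · rw [mul_smul, h1, h1]
      · rw [mul_smul, h1, h.comm, h1, h.invol])
    omega
  have hcardK : Nat.card f.ker ∣ 6 := by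
    have h1 : f.ker ≤ stabilizer G (S p hp) := fun g hg => hker g hg _
    have h2 := Subgroup.index_mul_card (stabilizer G (S p hp))
    rw [index_stabilizer_of_transitive, hSp, hG] at h2
    have h3 : Nat.card (stabilizer G (S p hp)) = 6 := by omega
    rw [← h3]
    exact Subgroup.card_dvd_of_le h1
  have h3K : ¬ 3 ∣ Nat.card f.ker := by
    intro h3
    obtain ⟨x, hx⟩ := exists_prime_orderOf_dvd_card' 3 h3
    have h1 := hsq x x.2
    have h2 : orderOf x ∣ 2 := orderOf_dvd_of_pow_eq_one (by
      rw [pow_two]; exact Subtype.ext h1)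
    rw [hx] at h2
    norm_num at h2
  have hK2 : Nat.card f.ker ≤ 2 := by
    have : Nat.card f.ker ≤ 6 := Nat.le_of_dvd (by norm_num) hcardK
    generalize Nat.card f.ker = n at *
    interval_cases n <;> omega
  have hinj : Function.Injective f := by
    rw [injective_iff_map_eq_one]
    intro g hg
    by_contra hne
    have hgK : g ∈ f.ker := hg
    obtain ⟨q, hq⟩ := h.fix g hne
    have hcomm : ∀ k : G, k⁻¹ * g * k = g := by
      intro k
      by_contra hk
      have hkK : k⁻¹ * g * k ∈ f.ker := by
        simpa using (MonoidHom.normal_ker f).conj_mem g hgK k⁻¹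
      have hk1 : k⁻¹ * g * k ≠ 1 := by
        intro h1
        apply hne
        calc g = k * (k⁻¹ * g * k) * k⁻¹ := by group
          _ = 1 := by rw [h1]; group
      have hsub : ({1, g, k⁻¹ * g * k} : Set G) ⊆ f.ker := by
        intro x hx
        simp only [Set.mem_insert_iff, Set.mem_singleton_iff] at hx
        rcases hx with rfl | rfl | rfl
        · exact one_mem _
        · exact hgK
        · exact hkK
      have h1 := Set.ncard_le_ncard hsub (Set.toFinite _)
      have h2 : ({1, g, k⁻¹ * g * k} : Set G).ncard = 3 :=
        Set.ncard_eq_three.2 ⟨_, _, _, Ne.symm hne, Ne.symm hk1, Ne.symm hk, rfl⟩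
      have h3 : (f.ker : Set G).ncard = Nat.card f.ker := rfl
      omega
    have := hbig q
    have := h.card_orbit_le hne (p := q) (by
      intro k
      have h1 := hcomm k
      have h2 : (k⁻¹ * g * k) • q = q := by rw [h1]; exact (hq q).2 (Or.inl rfl)
      rwa [mul_smul, mul_smul, inv_smul_eq_iff] at h2)
    omega
  have hbij : Function.Bijective f := by
    rw [Nat.bijective_iff_injective_and_card]
    exact ⟨hinj, by rw [Nat.card_perm, hSp, hG]; rfl⟩
  have e : Sylow 3 G ≃ Fin 4 := Finite.equivFinOfCardEq hSp
  exact ⟨(MulEquiv.ofBijective f hbij).trans e.permCongrHom⟩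

lemma icosa [Finite G] (h : PoleAction G P s) (hG : Nat.card G = 60)
    (hst : ∀ p : P, Nat.card (stabilizer G p) = 2 ∨ Nat.card (stabilizer G p) = 3 ∨
      Nat.card (stabilizer G p) = 5)
    {p₀ : P} (hp₀ : Nat.card (stabilizer G p₀) = 2)
    (h2 : ∀ p q : P, Nat.card (stabilizer G p) = 2 → Nat.card (stabilizer G q) = 2 →
        q ∈ orbit G p) :
    Nonempty (G ≃* alternatingGroup (Fin 5)) := by
  have : Fact (Nat.Prime 2) := ⟨Nat.prime_two⟩
  have : Fact (Nat.Prime 3) := ⟨Nat.prime_three⟩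
  have hfac : (60 : ℕ).factorization 2 = 2 := by
    rw [show 60 = 2 ^ 2 * 15 by norm_num, Nat.factorization_mul (by norm_num) (by norm_num)]
    rw [Nat.Prime.factorization_pow Nat.prime_two]
    simp [Nat.factorization_eq_zero_of_not_dvd]
  have hSc : ∀ S : Sylow 2 G, Nat.card S = 4 := by
    intro S
    rw [S.card_eq_multiplicity, hG, hfac]; rfl
  -- element orders
  have hord : ∀ g : G, g ≠ 1 → orderOf g = 2 ∨ orderOf g = 3 ∨ orderOf g = 5 := by
    intro g hg
    obtain ⟨p, hp⟩ := h.fix g hg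
    have hgp : g ∈ stabilizer G p := (hp p).2 (Or.inl rfl)
    have h1 : orderOf g ∣ Nat.card (stabilizer G p) := Subgroup.orderOf_dvd_natCard _ hgp
    have h0 : orderOf g ≠ 1 := by rwa [Ne, orderOf_eq_one_iff]
    rcases hst p with h2 | h2 | h2 <;> rw [h2] at h1
    · exact Or.inl (((Nat.dvd_prime (by norm_num)).1 h1).resolve_left h0)
    · exact Or.inr (Or.inl (((Nat.dvd_prime (by norm_num)).1 h1).resolve_left h0))
    · exact Or.inr (Or.inr (((Nat.dvd_prime (by norm_num)).1 h1).resolve_left h0))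
  -- an involution fixes a pole of order two
  have hpole : ∀ t : G, orderOf t = 2 → ∃ p : P, Nat.card (stabilizer G p) = 2 ∧ t • p = p := by
    intro t ht
    have ht1 : t ≠ 1 := by rintro rfl; simp at ht
    obtain ⟨p, hp⟩ := h.fix t ht1
    have hgp : t ∈ stabilizer G p := (hp p).2 (Or.inl rfl)
    have h1 : orderOf t ∣ Nat.card (stabilizer G p) := Subgroup.orderOf_dvd_natCard _ hgp
    refine ⟨p, ?_, hgp⟩
    rw [ht] at h1
    rcases hst p with h2 | h2 | h2 <;> rw [h2] at h1 <;> first | exact h2 | norm_num at h1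
  -- order two stabilizers have only one nontrivial element
  have huniq : ∀ p : P, Nat.card (stabilizer G p) = 2 → ∀ x y : G, x • p = p → y • p = p →
      x ≠ 1 → y = 1 ∨ y = x := by
    intro p hp x y hx hy hx1
    by_contra! hc
    have hsub : ({1, x, y} : Set G) ⊆ stabilizer G p := by
      intro z hz
      simp only [Set.mem_insert_iff, Set.mem_singleton_iff] at hz
      rcases hz with rfl | rfl | rfl
      · exact one_mem _
      · exact hx
      · exact hy
    have h1 := Set.ncard_le_ncard hsub (Set.toFinite _)
    have h2 : ({1, x, y} : Set G).ncard = 3 :=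
      Set.ncard_eq_three.2 ⟨_, _, _, Ne.symm hx1, Ne.symm hc.1, Ne.symm hc.2, rfl⟩
    have h3 : (stabilizer G p : Set G).ncard = Nat.card (stabilizer G p) := rfl
    omega
  have hconj : ∀ t u : G, orderOf t = 2 → orderOf u = 2 → ∃ g : G, g * t * g⁻¹ = u := by
    intro t u ht hu
    have ht1 : t ≠ 1 := by rintro rfl; simp at ht
    have hu1 : u ≠ 1 := by rintro rfl; simp at hu
    obtain ⟨p, hp, htp⟩ := hpole t ht
    obtain ⟨q, hq, huq⟩ := hpole u hu
    obtain ⟨g, rfl⟩ := h2 p q hp hq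
    refine ⟨g, (huniq _ hq u (g * t * g⁻¹) huq ?_ hu1).resolve_left ?_⟩
    · simp only [mul_smul, inv_smul_smul, htp]
    · simpa using ht1
  have hcent : ∀ t : G, orderOf t = 2 → Nat.card (Subgroup.centralizer {t}) = 4 := by
    intro t ht
    have ht1 : t ≠ 1 := by rintro rfl; simp at ht
    obtain ⟨p, hp, htp⟩ := hpole t ht
    have hsp : stabilizer G (s p) = stabilizer G p := by
      ext g
      simp only [mem_stabilizer_iff, h.comm]
      constructor
      · intro h1
        have := congrArg s h1
        rwa [h.invol, h.invol] at this
      · intro h1; rw [h1]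
    obtain ⟨k, hk⟩ := h2 p (s p) hp (by rw [hsp, hp])
    replace hk : k • p = s p := hk
    have hkt : k * t = t * k := by
      have := (huniq p hp t (k⁻¹ * t * k) htp (by
        rw [mul_smul, mul_smul, inv_smul_eq_iff, hk, h.smul_s htp]) ht1).resolve_left (by
          intro h1
          apply ht1
          calc t = k * (k⁻¹ * t * k) * k⁻¹ := by group
            _ = 1 := by rw [h1]; group)
      calc k * t = k * (k⁻¹ * t * k) := by rw [this]
        _ = t * k := by group
    have hset : (Subgroup.centralizer {t} : Set G) = {1, t, k, k * t} := by
      ext g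
      simp only [SetLike.mem_coe, Subgroup.mem_centralizer_singleton_iff, Set.mem_insert_iff,
        Set.mem_singleton_iff]
      constructor
      · intro hg
        have h1 : t • g • p = g • p := by
          first
          | rw [← mul_smul, ← hg, mul_smul, htp]
          | rw [← mul_smul, hg, mul_smul, htp]
        rcases h.eq_or ht1 htp h1 with h3 | h3
        · rcases huniq p hp t g htp h3 ht1 with h4 | h4 <;> simp [h4]
        · have h5 : (k⁻¹ * g) • p = p := by rw [mul_smul, h3, inv_smul_eq_iff, hk]
          rcases huniq p hp t _ htp h5 ht1 with h4 | h4
          · rw [inv_mul_eq_iff_eq_mul] at h4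
            simp [h4]
          · rw [inv_mul_eq_iff_eq_mul] at h4
            simp [h4]
      · rintro (rfl | rfl | rfl | rfl)
        · simp
        · rfl
        · first | exact hkt | exact hkt.symm
        · first
          | (rw [hkt, mul_assoc, hkt])
          | (rw [hkt, mul_assoc, ← hkt])
          | (rw [← mul_assoc, ← hkt])
    have hk1 : k ∉ ({1, t} : Set G) := by
      simp only [Set.mem_insert_iff, Set.mem_singleton_iff]
      rintro (rfl | rfl)
      · rw [one_smul] at hk; exact h.ne p hk.symm
      · rw [htp] at hk; exact h.ne p hk.symm
    simp only [Set.mem_insert_iff, Set.mem_singleton_iff, not_or] at hk1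
    have h4 : (Subgroup.centralizer {t} : Set G).ncard = 4 := by
      rw [hset, Set.ncard_insert_of_notMem, Set.ncard_insert_of_notMem, Set.ncard_pair]
      · simpa using ht1
      · simp only [Set.mem_insert_iff, Set.mem_singleton_iff, not_or]
        exact ⟨Ne.symm hk1.2, by simpa using hk1.1⟩
      · simp only [Set.mem_insert_iff, Set.mem_singleton_iff, not_or]
        refine ⟨Ne.symm ht1, Ne.symm hk1.1, ?_⟩
        intro h5
        apply hk1.2
        have h6 : t * t = 1 := by rw [← pow_two, ← ht, pow_orderOf_eq_one]
        calc k = (k * t) * t := by rw [mul_assoc, h6, mul_one]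
          _ = t := by rw [← h5, one_mul]
    exact h4
  obtain ⟨t₀, ht₀, ht₀p⟩ := h.pole p₀
  have ht₀2 : orderOf t₀ = 2 := by
    have h1 : orderOf t₀ ∣ Nat.card (stabilizer G p₀) := Subgroup.orderOf_dvd_natCard _ ht₀p
    rw [hp₀] at h1
    exact ((Nat.dvd_prime (by norm_num)).1 h1).resolve_left (by rwa [orderOf_eq_one_iff])
  -- there are fifteen involutions
  have hI : Nat.card {t : G // orderOf t = 2} = 15 := by
    have h1 : {t : G | orderOf t = 2} = orbit (ConjAct G) t₀ := by
      ext t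
      constructor
      · intro ht
        obtain ⟨g, hg⟩ := hconj t₀ t ht₀2 ht
        exact ⟨ConjAct.toConjAct g, by simpa [ConjAct.smul_def] using hg⟩
      · rintro ⟨g, rfl⟩
        simp only [ConjAct.smul_def, Set.mem_ofPred_eq]
        rw [← ht₀2]
        exact orderOf_injective (MulAut.conj (ConjAct.ofConjAct g)).toMonoidHom
          (MulAut.conj (ConjAct.ofConjAct g)).injective t₀
    have h3 := orbit_mul_stab (G := ConjAct G) t₀
    rw [← Subgroup.nat_card_centralizer_nat_card_stabilizer, hcent t₀ ht₀2] at h3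
    have h4 : Nat.card (ConjAct G) = 60 := hG
    rw [h4, ← h1] at h3
    have h5 : {t : G | orderOf t = 2}.ncard = Nat.card {t : G // orderOf t = 2} := rfl
    omega
  -- each involution lies in exactly one Sylow subgroup
  have hmem : ∀ t : G, orderOf t = 2 → ∀ S : Sylow 2 G, t ∈ S →
      (S : Subgroup G) = Subgroup.centralizer {t} := by
    intro t ht S hS
    apply Subgroup.eq_of_le_of_card_ge
    · intro x hx
      have : IsMulCommutative S :=
        IsPGroup.isMulCommutative_of_card_eq_prime_sq (p := 2) (by rw [hSc S]; rfl)
      have h1 := this.is_comm.comm (⟨x, hx⟩ : S) ⟨t, hS⟩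
      have h2 : x * t = t * x := congrArg Subtype.val h1
      rw [Subgroup.mem_centralizer_singleton_iff]
      first | exact h2 | exact h2.symm
    · rw [hcent t ht]; exact (hSc S).ge
  let T : {t : G // orderOf t = 2} → Sylow 2 G := fun t =>
    Sylow.ofCard (Subgroup.centralizer {t.1}) (by rw [hG, hfac, hcent t.1 t.2]; rfl)
  have hT : ∀ t, t.1 ∈ T t := fun t => by
    change t.1 ∈ Subgroup.centralizer {t.1}
    rw [Subgroup.mem_centralizer_singleton_iff]
  have hordS : ∀ S : Sylow 2 G, ∀ x ∈ S, x ≠ 1 → orderOf x = 2 := by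
    intro S x hx hx1
    have h1 : orderOf x ∣ Nat.card S := Subgroup.orderOf_dvd_natCard _ hx
    rw [hSc] at h1
    rcases hord x hx1 with h3 | h3 | h3 <;> rw [h3] at h1 <;> first | exact h3 | norm_num at h1
  let E : {t : G // orderOf t = 2} ≃ Σ S : Sylow 2 G, {x : S // x ≠ 1} :=
    { toFun := fun t => ⟨T t, ⟨⟨t.1, hT t⟩, by
        intro h1
        have h3 : t.1 = 1 := congrArg Subtype.val h1
        have := t.2
        rw [h3] at this
        simp at this⟩⟩
      invFun := fun x => ⟨x.2.1.1, hordS x.1 _ x.2.1.2 (by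
        intro h1; exact x.2.2 (Subtype.ext h1))⟩
      left_inv := fun t => rfl
      right_inv := by
        rintro ⟨S, ⟨⟨x, hx⟩, hx1⟩⟩
        have hx2 : orderOf x = 2 := hordS S x hx (by
          intro h1; exact hx1 (Subtype.ext h1))
        have : T ⟨x, hx2⟩ = S := by
          apply Sylow.ext
          rw [hmem x hx2 S hx]
          rfl
        subst this
        rfl }
  have hn : Nat.card (Sylow 2 G) = 5 := by
    have := Fintype.ofFinite (Sylow 2 G)
    have h1 := Nat.card_congr E
    rw [hI, Nat.card_sigma] at h1
    have h3 : ∀ S : Sylow 2 G, Nat.card {x : S // x ≠ 1} = 3 := by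
      intro S
      have h4 := hSc S
      have := Fintype.ofFinite S
      classical
      rw [Nat.card_eq_fintype_card, Fintype.card_subtype_compl, Fintype.card_subtype_eq,
        ← Nat.card_eq_fintype_card]
      change Nat.card (S : Subgroup G) - 1 = 3
      rw [h4]
    simp only [h3, Finset.sum_const, Finset.card_univ, smul_eq_mul] at h1
    rw [Nat.card_eq_fintype_card]
    omega
  let f := toPermHom G (Sylow 2 G)
  have hcardK : Nat.card f.ker ∣ 12 := by
    let S₀ : Sylow 2 G := default
    have h1 : f.ker ≤ stabilizer G S₀ := fun g hg => by
      have : g • S₀ = S₀ := congrArg (fun f => f S₀) (MonoidHom.mem_ker.1 hg)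
      exact this
    have h2 := Subgroup.index_mul_card (stabilizer G S₀)
    rw [index_stabilizer_of_transitive, hn, hG] at h2
    have h3 : Nat.card (stabilizer G S₀) = 12 := by omega
    rw [← h3]
    exact Subgroup.card_dvd_of_le h1
  have hK12 : Nat.card f.ker ≤ 12 := Nat.le_of_dvd (by norm_num) hcardK
  have hK2 : ¬ 2 ∣ Nat.card f.ker := by
    intro h3
    obtain ⟨x, hx⟩ := exists_prime_orderOf_dvd_card' 2 h3
    have hx' : orderOf (x : G) = 2 := by rw [Subgroup.orderOf_coe, hx]
    have hsub : {t : G | orderOf t = 2} ⊆ f.ker := by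
      intro t ht
      obtain ⟨g, rfl⟩ := hconj x t hx' ht
      exact (MonoidHom.normal_ker f).conj_mem _ x.2 g
    have h4 := Set.ncard_le_ncard hsub (Set.toFinite _)
    have h5 : {t : G | orderOf t = 2}.ncard = Nat.card {t : G // orderOf t = 2} := rfl
    have h6 : (f.ker : Set G).ncard = Nat.card f.ker := rfl
    omega
  have hK : Nat.card f.ker = 1 ∨ Nat.card f.ker = 3 := by
    generalize Nat.card f.ker = n at *
    interval_cases n <;> omega
  have hK1 : Nat.card f.ker = 1 := by
    refine hK.resolve_right fun hK3 => ?_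
    obtain ⟨x, hx⟩ := exists_prime_orderOf_dvd_card' (G := f.ker) 3 (by rw [hK3])
    have hx' : orderOf (x : G) = 3 := by rw [Subgroup.orderOf_coe, hx]
    have hx1 : (x : G) ≠ 1 := by intro h1; rw [h1] at hx'; simp at hx'
    obtain ⟨p, hp⟩ := h.fix x hx1
    have hxp : (x : G) ∈ stabilizer G p := (hp p).2 (Or.inl rfl)
    have hsp : Nat.card (stabilizer G p) = 3 := by
      have h1 : orderOf (x : G) ∣ Nat.card (stabilizer G p) := Subgroup.orderOf_dvd_natCard _ hxp
      rw [hx'] at h1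
      rcases hst p with h2 | h2 | h2 <;> rw [h2] at h1 <;> first | exact h2 | norm_num at h1
    have hle : Subgroup.zpowers (x : G) ≤ stabilizer G p := by
      rwa [Subgroup.zpowers_le]
    have hle' : Subgroup.zpowers (x : G) ≤ f.ker := by
      rw [Subgroup.zpowers_le]; exact x.2
    have e1 := Subgroup.eq_of_le_of_card_ge hle (by rw [Nat.card_zpowers, hx', hsp])
    have e2 := Subgroup.eq_of_le_of_card_ge hle' (by rw [Nat.card_zpowers, hx', hK3])
    have e3 : f.ker = stabilizer G p := e2.symm.trans e1
    have h1 := h.card_orbit_le hx1 (p := p) (by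
      intro k
      have h1 : k⁻¹ * x * k ∈ f.ker := by
        simpa using (MonoidHom.normal_ker f).conj_mem x x.2 k⁻¹
      replace h1 : k⁻¹ * x * k ∈ stabilizer G p := e3.le h1
      rw [mem_stabilizer_iff, mul_smul, mul_smul, inv_smul_eq_iff] at h1
      exact h1)
    have h2 := orbit_mul_stab (G := G) p
    rw [hsp, hG] at h2
    omega
  have hinj : Function.Injective f := by
    rw [← MonoidHom.ker_eq_bot_iff]
    exact Subgroup.card_eq_one.1 hK1
  exact alt_of_inj 5 hn (by norm_num) (by rw [hG]; rfl) f hinj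

theorem main [Finite G] [Finite P] (h : PoleAction G P s) :
    (∃ n : ℕ, 1 ≤ n ∧ Nonempty (G ≃* Multiplicative (ZMod n))) ∨
    (∃ n : ℕ, 2 ≤ n ∧ Nonempty (G ≃* DihedralGroup n)) ∨
    Nonempty (G ≃* alternatingGroup (Fin 4)) ∨
    Nonempty (G ≃* Equiv.Perm (Fin 4)) ∨
    Nonempty (G ≃* alternatingGroup (Fin 5)) := by
  by_cases hG : 2 ≤ Nat.card G
  · rcases h.cases hG with ⟨p, hp⟩ | ⟨p, hp⟩ | ⟨hN, p, hp⟩ | ⟨hN, ⟨p, hp⟩, hb⟩ |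
      ⟨hN, hst, ⟨p, hp⟩, h2⟩
    · exact Or.inl (h.cyclic hp)
    · exact Or.inr (Or.inl (h.dihedral hp))
    · exact Or.inr (Or.inr (Or.inl (h.tetra hN hp)))
    · exact Or.inr (Or.inr (Or.inr (Or.inl (h.octa hN hp hb))))
    · exact Or.inr (Or.inr (Or.inr (Or.inr (h.icosa hN hst hp h2))))
  · left
    have h1 : Nat.card G = 1 := by
      have : 0 < Nat.card G := Nat.card_pos
      omega
    have := (Nat.card_eq_one_iff_unique.1 h1).1
    have hc : IsCyclic G := inferInstance
    exact ⟨Nat.card G, Nat.card_pos, ⟨(zmodCyclicMulEquiv hc).symm⟩⟩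

end

end PoleAction

namespace Rot3

/-- The cofactor identity for the cross product. -/
lemma cross_mulVec {A : Matrix (Fin 3) (Fin 3) ℝ} (hA : Aᵀ * A = 1) (hd : A.det = 1)
    (v w : Fin 3 → ℝ) : (A *ᵥ v) ⨯₃ (A *ᵥ w) = A *ᵥ (v ⨯₃ w) := by
  have h1 : Aᵀ *ᵥ ((A *ᵥ v) ⨯₃ (A *ᵥ w)) = A.det • (v ⨯₃ w) := by
    ext i
    rw [Matrix.det_fin_three]
    fin_cases i <;>
      simp [Matrix.mulVec, dotProduct, Fin.sum_univ_three, cross_apply] <;> ring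
  have hA' : A * Aᵀ = 1 := mul_eq_one_comm.1 hA
  rw [hd, one_smul] at h1
  rw [← h1, Matrix.mulVec_mulVec, hA', Matrix.one_mulVec]

lemma dot_mulVec {A : Matrix (Fin 3) (Fin 3) ℝ} (hA : Aᵀ * A = 1) (v w : Fin 3 → ℝ) :
    (A *ᵥ v) ⬝ᵥ (A *ᵥ w) = v ⬝ᵥ w := by
  rw [Matrix.dotProduct_mulVec, ← Matrix.mulVec_transpose, Matrix.mulVec_mulVec, hA,
    Matrix.one_mulVec]

lemma exists_axis {A : Matrix (Fin 3) (Fin 3) ℝ} (hA : Aᵀ * A = 1) (hd : A.det = 1) :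
    ∃ v : Fin 3 → ℝ, v ⬝ᵥ v = 1 ∧ A *ᵥ v = v := by
  have h0 : (A - 1).det = 0 := by
    have h1 : Aᵀ * (A - 1) = -(A - 1)ᵀ := by
      rw [mul_sub, hA, mul_one, Matrix.transpose_sub, Matrix.transpose_one, neg_sub]
    have h2 := congrArg Matrix.det h1
    rw [Matrix.det_mul, Matrix.det_transpose, hd, Matrix.det_neg, Matrix.det_transpose] at h2
    norm_num at h2
    linarith
  obtain ⟨v, hv, hv0⟩ := Matrix.exists_mulVec_eq_zero_iff.2 h0
  rw [Matrix.sub_mulVec, Matrix.one_mulVec, sub_eq_zero] at hv0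
  have hpos : 0 < v ⬝ᵥ v := by
    have h1 : v ⬝ᵥ v ≠ 0 := by rwa [Ne, dotProduct_self_eq_zero]
    have h2 : 0 ≤ v ⬝ᵥ v := by
      rw [dotProduct]; exact Finset.sum_nonneg fun i _ => mul_self_nonneg _
    exact lt_of_le_of_ne h2 h1.symm
  refine ⟨(Real.sqrt (v ⬝ᵥ v))⁻¹ • v, ?_, ?_⟩
  · rw [smul_dotProduct, dotProduct_smul, smul_eq_mul, smul_eq_mul, ← mul_assoc, ← mul_inv,
      Real.mul_self_sqrt hpos.le, inv_mul_cancel₀ hpos.ne']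
  · rw [Matrix.mulVec_smul, hv0]

lemma eq_or_neg {v w : Fin 3 → ℝ} (hv : v ⬝ᵥ v = 1) (hw : w ⬝ᵥ w = 1) (h : v ⨯₃ w = 0) :
    w = v ∨ w = -v := by
  have h1 : (v ⨯₃ w) ⬝ᵥ (v ⨯₃ w) = 0 := by rw [h]; simp
  rw [cross_dot_cross, hv, hw, dotProduct_comm w v] at h1
  have h2 : (v ⬝ᵥ w - 1) * (v ⬝ᵥ w + 1) = 0 := by linarith
  rcases mul_eq_zero.1 h2 with h3 | h3
  · left
    rw [← sub_eq_zero, ← dotProduct_self_eq_zero (v := w - v)]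
    simp only [dotProduct_sub, sub_dotProduct, dotProduct_comm w v, hv, hw]
    linarith
  · right
    rw [eq_neg_iff_add_eq_zero, ← dotProduct_self_eq_zero (v := w + v)]
    simp only [dotProduct_add, add_dotProduct, dotProduct_comm w v, hv, hw]
    linarith

lemma eq_one_of_fix {A : Matrix (Fin 3) (Fin 3) ℝ} (hA : Aᵀ * A = 1) (hd : A.det = 1)
    {v w : Fin 3 → ℝ} (h : v ⨯₃ w ≠ 0) (hv : A *ᵥ v = v) (hw : A *ᵥ w = w) : A = 1 := by
  have hc : A *ᵥ (v ⨯₃ w) = v ⨯₃ w := by rw [← cross_mulVec hA hd, hv, hw]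
  let B : Matrix (Fin 3) (Fin 3) ℝ := (Matrix.of ![v ⨯₃ w, v, w])ᵀ
  have hB : B.det ≠ 0 := by
    have h1 : B.det = (v ⨯₃ w) ⬝ᵥ (v ⨯₃ w) := by
      rw [triple_product_eq_det, Matrix.det_transpose]; rfl
    rw [h1]
    rwa [Ne, dotProduct_self_eq_zero]
  have hAB : A * B = B := by
    ext i j
    have : (A * B) i j = (A *ᵥ (fun k => B k j)) i := rfl
    rw [this]
    fin_cases j
    · exact congrFun hc i
    · exact congrFun hv i
    · exact congrFun hw i
  have hu : IsUnit B.det := hB.isUnit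
  calc A = A * B * B⁻¹ := by rw [Matrix.mul_nonsing_inv_cancel_right _ _ hu]
    _ = 1 := by rw [hAB, Matrix.mul_nonsing_inv _ hu]

/-- A unit vector extends to an orthonormal frame. -/
lemma exists_perp (v : Fin 3 → ℝ) (hv : v ⬝ᵥ v = 1) :
    ∃ u : Fin 3 → ℝ, u ⬝ᵥ u = 1 ∧ v ⬝ᵥ u = 0 := by
  have hex : ∃ u : Fin 3 → ℝ, u ≠ 0 ∧ v ⬝ᵥ u = 0 := by
    by_cases h : v 0 = 0 ∧ v 1 = 0
    · refine ⟨![1, 0, 0], ?_, ?_⟩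
      · intro h1; simpa using congrFun h1 0
      · simp [dotProduct, Fin.sum_univ_three, h.1]
    · refine ⟨![v 1, - v 0, 0], ?_, ?_⟩
      · intro h1
        apply h
        exact ⟨by simpa using congrFun h1 1, by simpa using congrFun h1 0⟩
      · simp [dotProduct, Fin.sum_univ_three]; ring
  obtain ⟨u, hu, hvu⟩ := hex
  have hpos : 0 < u ⬝ᵥ u := by
    have h1 : u ⬝ᵥ u ≠ 0 := by rwa [Ne, dotProduct_self_eq_zero]
    have h2 : 0 ≤ u ⬝ᵥ u := by
      rw [dotProduct]; exact Finset.sum_nonneg fun i _ => mul_self_nonneg _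
    exact lt_of_le_of_ne h2 h1.symm
  refine ⟨(Real.sqrt (u ⬝ᵥ u))⁻¹ • u, ?_, ?_⟩
  · rw [smul_dotProduct, dotProduct_smul, smul_eq_mul, smul_eq_mul, ← mul_assoc, ← mul_inv,
      Real.mul_self_sqrt hpos.le, inv_mul_cancel₀ hpos.ne']
  · rw [dotProduct_smul, hvu, smul_zero]

/-- Expansion of a vector orthogonal to `v` in the frame `u, v × u`. -/
lemma expand {v u x : Fin 3 → ℝ} (hv : v ⬝ᵥ v = 1) (hu : u ⬝ᵥ u = 1) (hvu : v ⬝ᵥ u = 0)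
    (hx : v ⬝ᵥ x = 0) : x = (u ⬝ᵥ x) • u + ((v ⨯₃ u) ⬝ᵥ x) • (v ⨯₃ u) := by
  let M : Matrix (Fin 3) (Fin 3) ℝ := Matrix.of ![v, u, v ⨯₃ u]
  have hww : (v ⨯₃ u) ⬝ᵥ (v ⨯₃ u) = 1 := by
    rw [cross_dot_cross, hv, hu, hvu, dotProduct_comm u v, hvu]; ring
  have hvw : v ⬝ᵥ (v ⨯₃ u) = 0 := dot_self_cross v u
  have huw : u ⬝ᵥ (v ⨯₃ u) = 0 := dot_cross_self v u
  have hM : M * Mᵀ = 1 := by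
    ext i j
    have : (M * Mᵀ) i j = M i ⬝ᵥ M j := rfl
    rw [this]
    have huv : u ⬝ᵥ v = 0 := by rw [dotProduct_comm, hvu]
    have hwv : (v ⨯₃ u) ⬝ᵥ v = 0 := by rw [dotProduct_comm, hvw]
    have hwu : (v ⨯₃ u) ⬝ᵥ u = 0 := by rw [dotProduct_comm, huw]
    fin_cases i <;> fin_cases j
    · exact hv
    · exact hvu
    · exact hvw
    · exact huv
    · exact hu
    · exact huw
    · exact hwv
    · exact hwu
    · exact hww
  have hM' : Mᵀ * M = 1 := mul_eq_one_comm.1 hM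
  have hMx : M *ᵥ x = ![0, u ⬝ᵥ x, (v ⨯₃ u) ⬝ᵥ x] := by
    ext i
    fin_cases i
    · exact hx
    · rfl
    · rfl
  have h1 : x = Mᵀ *ᵥ (M *ᵥ x) := by rw [Matrix.mulVec_mulVec, hM', Matrix.one_mulVec]
  conv_lhs => rw [h1, hMx]
  ext i
  simp [Matrix.mulVec, dotProduct, Fin.sum_univ_three, M]
  ring

/-- The unit vectors fixed by some nontrivial element of `G`. -/
def Pole (G : Subgroup (GL (Fin 3) ℝ)) : Type :=
  {v : Fin 3 → ℝ // v ⬝ᵥ v = 1 ∧ ∃ g ∈ G, g ≠ 1 ∧ (g : Matrix (Fin 3) (Fin 3) ℝ) *ᵥ v = v}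

end Rot3

open Rot3

theorem stmt0 (G : Subgroup (GL (Fin 3) ℝ)) (hfin : Finite G)
    (horth : ∀ A : GL (Fin 3) ℝ, A ∈ G → (A : Matrix (Fin 3) (Fin 3) ℝ)ᵀ * A = 1)
    (hdet : ∀ A : GL (Fin 3) ℝ, A ∈ G → Matrix.det (A : Matrix (Fin 3) (Fin 3) ℝ) = 1) :
    (∃ n : ℕ, 1 ≤ n ∧ Nonempty (G ≃* Multiplicative (ZMod n))) ∨
    (∃ n : ℕ, 2 ≤ n ∧ Nonempty (G ≃* DihedralGroup n)) ∨
    Nonempty (G ≃* alternatingGroup (Fin 4)) ∨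
    Nonempty (G ≃* Equiv.Perm (Fin 4)) ∨
    Nonempty (G ≃* alternatingGroup (Fin 5)) := by
  let act : MulAction G (Pole G) :=
    { smul := fun g v => ⟨((g : GL (Fin 3) ℝ) : Matrix (Fin 3) (Fin 3) ℝ) *ᵥ v.1, by
        obtain ⟨v, hv, k, hk, hk1, hkv⟩ := v
        refine ⟨by rw [dot_mulVec (horth _ g.2), hv], g.1 * k * g.1⁻¹,
          G.mul_mem (G.mul_mem g.2 hk) (G.inv_mem g.2), ?_, ?_⟩
        · intro h1
          apply hk1
          rwa [mul_inv_eq_one, mul_eq_left] at h1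
        · change _ *ᵥ (_ *ᵥ v) = _ *ᵥ v
          rw [Matrix.mulVec_mulVec, ← Units.val_mul, inv_mul_cancel_right, Units.val_mul,
            ← Matrix.mulVec_mulVec, hkv]⟩
      one_smul := fun v => Subtype.ext (by
        change ((1 : GL (Fin 3) ℝ) : Matrix (Fin 3) (Fin 3) ℝ) *ᵥ v.1 = v.1
        rw [Units.val_one, Matrix.one_mulVec])
      mul_smul := fun g k v => Subtype.ext (by
        change ((g * k : GL (Fin 3) ℝ) : Matrix (Fin 3) (Fin 3) ℝ) *ᵥ v.1 =
          ((g : GL (Fin 3) ℝ) : Matrix (Fin 3) (Fin 3) ℝ) *ᵥ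
            (((k : GL (Fin 3) ℝ) : Matrix (Fin 3) (Fin 3) ℝ) *ᵥ v.1)
        rw [Units.val_mul, Matrix.mulVec_mulVec]) }
  have hsm : ∀ (g : G) (p : Pole G),
      (g • p).1 = ((g : GL (Fin 3) ℝ) : Matrix (Fin 3) (Fin 3) ℝ) *ᵥ p.1 := fun _ _ => rfl
  have hfixiff : ∀ (g : G) (p : Pole G), g • p = p ↔
      ((g : GL (Fin 3) ℝ) : Matrix (Fin 3) (Fin 3) ℝ) *ᵥ p.1 = p.1 := by
    intro g p
    rw [← hsm]
    exact Subtype.ext_iff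
  let s : Pole G → Pole G := fun v => ⟨-v.1, by
    obtain ⟨v, hv, k, hk, hk1, hkv⟩ := v
    refine ⟨by simpa using hv, k, hk, hk1, ?_⟩
    change _ *ᵥ (-v) = -v
    rw [Matrix.mulVec_neg, hkv]⟩
  have hs : ∀ p, (s p).1 = -p.1 := fun _ => rfl
  have hone : ∀ g : G, ((g : GL (Fin 3) ℝ) : Matrix (Fin 3) (Fin 3) ℝ) = 1 → g = 1 := by
    intro g hg
    apply Subtype.ext
    apply Units.ext
    rw [hg]; rfl
  have hfix : ∀ g : G, g ≠ 1 → ∃ p : Pole G, ∀ q : Pole G, g • q = q ↔ q = p ∨ q = s p := by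
    intro g hg
    obtain ⟨v, hv, hgv⟩ := exists_axis (horth _ g.2) (hdet _ g.2)
    refine ⟨⟨v, hv, g, g.2, fun h1 => hg (Subtype.ext h1), hgv⟩, fun q => ?_⟩
    rw [hfixiff]
    constructor
    · intro hq
      have h0 : v ⨯₃ q.1 = 0 := by
        by_contra hne
        exact hg (hone g (eq_one_of_fix (horth _ g.2) (hdet _ g.2) hne hgv hq))
      rcases eq_or_neg hv q.2.1 h0 with h1 | h1
      · exact Or.inl (Subtype.ext h1)
      · exact Or.inr (Subtype.ext h1)
    · rintro (rfl | rfl)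
      · exact hgv
      · change _ *ᵥ (-v) = -v
        rw [Matrix.mulVec_neg]
        exact congrArg _ hgv
  have hP : Finite (Pole G) := by
    choose f hf using hfix
    have : Set.Finite (Set.univ : Set (Pole G)) := by
      refine Set.Finite.subset (Set.finite_iUnion (fun g : {g : G // g ≠ 1} =>
        (Set.toFinite ({f g.1 g.2, s (f g.1 g.2)} : Set (Pole G))))) ?_
      intro q _
      obtain ⟨g, hg, hg1, hgq⟩ := q.2.2
      rw [Set.mem_iUnion]
      have hg1' : (⟨g, hg⟩ : G) ≠ 1 := fun h1 => hg1 (congrArg Subtype.val h1)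
      refine ⟨⟨⟨g, hg⟩, hg1'⟩, ?_⟩
      have := (hf ⟨g, hg⟩ hg1' q).1 ((hfixiff _ _).2 hgq)
      simpa using this
    exact Set.finite_univ_iff.1 this
  refine PoleAction.main (P := Pole G) (s := s) ⟨?_, ?_, ?_, hfix, ?_, ?_⟩
  · intro g p
    apply Subtype.ext
    rw [hsm, hs, hs, hsm, Matrix.mulVec_neg]
  · intro p hp
    have h1 : -p.1 = p.1 := congrArg Subtype.val hp
    have h2 : p.1 = 0 := by
      ext i
      have := congrFun h1 i
      simp only [Pi.neg_apply] at this
      simp only [Pi.zero_apply]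
      linarith
    have := p.2.1
    rw [h2] at this
    simp at this
  · intro p
    apply Subtype.ext
    rw [hs, hs, neg_neg]
  · intro p
    obtain ⟨u, hu, hvu⟩ := exists_perp p.1 p.2.1
    have hv := p.2.1
    let mat : MulAction.stabilizer G p → Matrix (Fin 3) (Fin 3) ℝ := fun g =>
      ((g.1 : GL (Fin 3) ℝ) : Matrix (Fin 3) (Fin 3) ℝ)
    have ho : ∀ g, (mat g)ᵀ * mat g = 1 := fun g => horth _ g.1.2
    have hd : ∀ g, (mat g).det = 1 := fun g => hdet _ g.1.2
    have hm : ∀ g, mat g *ᵥ p.1 = p.1 := fun g => (hfixiff _ _).1 g.2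
    have hexp : ∀ g, mat g *ᵥ u = (u ⬝ᵥ mat g *ᵥ u) • u +
        ((p.1 ⨯₃ u) ⬝ᵥ mat g *ᵥ u) • (p.1 ⨯₃ u) := by
      intro g
      apply expand hv hu hvu
      rw [← hvu, ← dot_mulVec (ho g) p.1 u, hm]
    have hww : (p.1 ⨯₃ u) ⬝ᵥ (p.1 ⨯₃ u) = 1 := by
      rw [cross_dot_cross, hv, hu, hvu, dotProduct_comm u, hvu]; ring
    have huw : u ⬝ᵥ (p.1 ⨯₃ u) = 0 := dot_cross_self p.1 u
    have hwu : (p.1 ⨯₃ u) ⬝ᵥ u = 0 := by rw [dotProduct_comm, huw]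
    have hvw : p.1 ⨯₃ (p.1 ⨯₃ u) = -u := by
      rw [cross_cross_eq_smul_sub_smul', hv, hvu]; simp
    have hexpw : ∀ g, mat g *ᵥ (p.1 ⨯₃ u) = (u ⬝ᵥ mat g *ᵥ u) • (p.1 ⨯₃ u) -
        ((p.1 ⨯₃ u) ⬝ᵥ mat g *ᵥ u) • u := by
      intro g
      rw [← cross_mulVec (ho g) (hd g), hm]
      conv_lhs => rw [hexp g]
      rw [map_add, map_smul, map_smul, hvw, smul_neg, sub_eq_add_neg]
    have hmul : ∀ g k, mat (g * k) *ᵥ u = mat g *ᵥ (mat k *ᵥ u) := by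
      intro g k
      rw [Matrix.mulVec_mulVec]; rfl
    let f : MulAction.stabilizer G p →* ℂ :=
      { toFun := fun g => ⟨u ⬝ᵥ mat g *ᵥ u, (p.1 ⨯₃ u) ⬝ᵥ mat g *ᵥ u⟩
        map_one' := by
          have h1 : mat 1 = 1 := rfl
          rw [h1, Matrix.one_mulVec, hu, hwu]; rfl
        map_mul' := by
          intro g k
          have h1 : mat (g * k) *ᵥ u = (u ⬝ᵥ mat k *ᵥ u) • (mat g *ᵥ u) +
              ((p.1 ⨯₃ u) ⬝ᵥ mat k *ᵥ u) • (mat g *ᵥ (p.1 ⨯₃ u)) := by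
            rw [hmul, ← Matrix.mulVec_smul, ← Matrix.mulVec_smul, ← Matrix.mulVec_add, ← hexp k]
          rw [h1, hexpw g]
          apply Complex.ext
          · simp only [dotProduct_add, dotProduct_sub, dotProduct_smul, huw, hu, smul_eq_mul,
              Complex.mul_re]
            ring
          · simp only [dotProduct_add, dotProduct_sub, dotProduct_smul, hwu, hww, smul_eq_mul,
              Complex.mul_im]
            ring }
    have hf : Function.Injective f := by
      rw [injective_iff_map_eq_one]
      intro g hg
      have h1 : u ⬝ᵥ mat g *ᵥ u = 1 := congrArg Complex.re hg
      have h2 : (p.1 ⨯₃ u) ⬝ᵥ mat g *ᵥ u = 0 := congrArg Complex.im hg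
      have h3 : mat g *ᵥ u = u := by rw [hexp g, h1, h2]; simp
      have hne : p.1 ⨯₃ u ≠ 0 := by
        intro h0
        rw [h0] at hww
        simp at hww
      apply Subtype.ext
      exact hone _ (eq_one_of_fix (ho g) (hd g) hne (hm g) h3)
    exact isCyclic_of_injective_ringHom f hf
  · intro p
    obtain ⟨g, hg, hg1, hgp⟩ := p.2.2
    exact ⟨⟨g, hg⟩, fun h1 => hg1 (congrArg Subtype.val h1), (hfixiff _ _).2 hgp⟩
end

section
/- Let u and v be coprime positive integers. Two unit quaternions q = z₁ + z₂ j and q' = z₁' + z₂' j lie in the same orbit of the circle action w · (z₁ + z₂ j) = wᵛ z₁ + wᵘ z₂ j (that is, there exists a complex number w with |w| = 1 such that z₁' = wᵛ z₁ and z₂' = wᵘ z₂) if and only if z₁ᵘ (z₂')ᵛ = (z₁')ᵘ z₂ᵛ. -/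
theorem aux_norm (u v : ℕ) (hu : 0 < u) (hv : 0 < v) (a b c d : ℝ) (ha : 0 ≤ a) (hb : 0 ≤ b)
    (hc : 0 ≤ c) (hd : 0 ≤ d) (h : a ^ 2 + b ^ 2 = 1) (h' : c ^ 2 + d ^ 2 = 1)
    (e : a ^ u * d ^ v = c ^ u * b ^ v) : c ≤ a := by
  by_contra! hlt
  have hdb : d < b := by
    by_contra! hh
    nlinarith
  have h1 : a ^ u < c ^ u := pow_lt_pow_left₀ hlt ha hu.ne'
  have h2 : d ^ v < b ^ v := pow_lt_pow_left₀ hdb hd hv.ne'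
  have h3 : 0 ≤ a ^ u := by positivity
  have h4 : 0 ≤ d ^ v := by positivity
  nlinarith

theorem aux_root (u : ℕ) (hu : 0 < u) (x y : ℂ) (hx : x ≠ 0) (hn : ‖y‖ = ‖x‖) :
    ∃ w : ℂ, ‖w‖ = 1 ∧ y = w ^ u * x := by
  obtain ⟨w, hw⟩ := IsAlgClosed.exists_pow_nat_eq (y / x) hu
  refine ⟨w, ?_, ?_⟩
  · have : ‖w‖ ^ u = 1 := by
      rw [← norm_pow, hw, norm_div, hn, div_self (norm_ne_zero_iff.mpr hx)]
    exact (pow_eq_one_iff_of_nonneg (norm_nonneg _) hu.ne').mp this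
  · rw [hw, div_mul_cancel₀ _ hx]

theorem aux_bezout (u v : ℕ) (huv : Nat.Coprime u v) (α β : ℂ) (hα : ‖α‖ = 1) (hβ : ‖β‖ = 1)
    (e : β ^ v = α ^ u) : ∃ w : ℂ, ‖w‖ = 1 ∧ α = w ^ v ∧ β = w ^ u := by
  have hα0 : α ≠ 0 := by
    rintro rfl
    simp at hα
  have hβ0 : β ≠ 0 := by
    rintro rfl
    simp at hβ
  have hb : (1 : ℤ) = u * Nat.gcdA u v + v * Nat.gcdB u v := by
    rw [← Nat.gcd_eq_gcd_ab, huv.gcd_eq_one]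
    rfl
  generalize Nat.gcdA u v = x at hb
  generalize Nat.gcdB u v = y at hb
  refine ⟨β ^ x * α ^ y, by simp [hα, hβ], ?_, ?_⟩
  · have : (β ^ x) ^ v = (α ^ u) ^ x := by
      rw [← e, ← zpow_natCast, ← zpow_natCast, ← zpow_mul, ← zpow_mul, mul_comm]
    rw [mul_pow, this, ← zpow_natCast, ← zpow_natCast, ← zpow_mul, ← zpow_mul, ← zpow_add₀ hα0,
      mul_comm y, ← hb, zpow_one]
  · have : (α ^ y) ^ u = (β ^ v) ^ y := by
      rw [e, ← zpow_natCast, ← zpow_natCast, ← zpow_mul, ← zpow_mul, mul_comm]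
    rw [mul_pow, this, ← zpow_natCast, ← zpow_natCast, ← zpow_mul, ← zpow_mul, ← zpow_add₀ hβ0,
      mul_comm x, ← hb, zpow_one]

/-- Let `u, v` be coprime positive integers. Two unit quaternions `z₁ + z₂ j` and
`z₁' + z₂' j` (unit: `|z₁|² + |z₂|² = 1`) lie in the same orbit of the circle action
`w • (z₁ + z₂ j) = wᵛ z₁ + wᵘ z₂ j` if and only if `z₁ᵘ (z₂')ᵛ = (z₁')ᵘ z₂ᵛ`. -/
theorem stmt6 (u v : ℕ) (hu : 0 < u) (hv : 0 < v) (huv : Nat.Coprime u v)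
    (z₁ z₂ z₁' z₂' : ℂ)
    (h : Complex.normSq z₁ + Complex.normSq z₂ = 1)
    (h' : Complex.normSq z₁' + Complex.normSq z₂' = 1) :
    (∃ w : ℂ, ‖w‖ = 1 ∧ z₁' = w ^ v * z₁ ∧ z₂' = w ^ u * z₂) ↔
      z₁ ^ u * z₂' ^ v = z₁' ^ u * z₂ ^ v := by
  constructor
  · rintro ⟨w, -, rfl, rfl⟩
    rw [mul_pow, mul_pow, ← pow_mul, ← pow_mul, mul_comm u v]
    ring
  intro e
  rw [Complex.normSq_eq_norm_sq, Complex.normSq_eq_norm_sq] at h h'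
  have en : ‖z₁‖ ^ u * ‖z₂'‖ ^ v = ‖z₁'‖ ^ u * ‖z₂‖ ^ v := by
    simpa using congrArg norm e
  have n1 : ‖z₁'‖ = ‖z₁‖ := le_antisymm
    (aux_norm u v hu hv _ _ _ _ (norm_nonneg _) (norm_nonneg _) (norm_nonneg _) (norm_nonneg _)
      h h' en)
    (aux_norm u v hu hv _ _ _ _ (norm_nonneg _) (norm_nonneg _) (norm_nonneg _) (norm_nonneg _)
      h' h en.symm)
  have n2 : ‖z₂'‖ = ‖z₂‖ := by
    rw [← sq_eq_sq₀ (norm_nonneg _) (norm_nonneg _)]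
    rw [n1] at h'
    linarith
  by_cases hz1 : z₁ = 0
  · subst hz1
    have hz1' : z₁' = 0 := by simpa using n1
    have hz2 : z₂ ≠ 0 := by
      rintro rfl
      simp at h
    obtain ⟨w, hw, hw'⟩ := aux_root u hu z₂ z₂' hz2 n2
    exact ⟨w, hw, by simp [hz1'], hw'⟩
  by_cases hz2 : z₂ = 0
  · subst hz2
    have hz2' : z₂' = 0 := by simpa using n2
    obtain ⟨w, hw, hw'⟩ := aux_root v hv z₁ z₁' hz1 n1
    exact ⟨w, hw, hw', by simp [hz2']⟩
  obtain ⟨w, hw, h1, h2⟩ := aux_bezout u v huv (z₁' / z₁) (z₂' / z₂)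
    (by rw [norm_div, n1, div_self (norm_ne_zero_iff.mpr hz1)])
    (by rw [norm_div, n2, div_self (norm_ne_zero_iff.mpr hz2)])
    (by
      rw [div_pow, div_pow, div_eq_div_iff (pow_ne_zero _ hz2) (pow_ne_zero _ hz1), mul_comm]
      exact e)
  exact ⟨w, hw, by rw [← h1, div_mul_cancel₀ _ hz1], by rw [← h2, div_mul_cancel₀ _ hz2]⟩
end

section
/- Every finite subgroup of the group of unit quaternions is conjugate, by some unit quaternion, to one of the following subgroups: the cyclic group C_n for some n ≥ 1; the binary dihedral group D*₄ₙ for some n ≥ 2; the binary tetrahedral group T*; the binary octahedral group O*; or the binary icosahedral group I*. -/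
open Quaternion
open scoped Quaternion

/-- The group of unit quaternions `S³`. -/
noncomputable abbrev UnitQuat : Type := Metric.sphere (0 : ℍ[ℝ]) 1

/-- The quaternion `cos(2π/n) + sin(2π/n) i`, a primitive `n`-th root of unity. -/
noncomputable def zetaQ (n : ℕ) : ℍ[ℝ] :=
  ⟨Real.cos (2 * Real.pi / n), Real.sin (2 * Real.pi / n), 0, 0⟩

/-- The quaternion `i`. -/
def iQ : ℍ[ℝ] := ⟨0, 1, 0, 0⟩

/-- The quaternion `j`. -/
def jQ : ℍ[ℝ] := ⟨0, 0, 1, 0⟩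

/-- The quaternion `ω = (1 + i + j + k)/2`. -/
noncomputable def omegaQ : ℍ[ℝ] := ⟨1/2, 1/2, 1/2, 1/2⟩

/-- The quaternion `(√2/2)(1 + j)`. -/
noncomputable def sigmaQ : ℍ[ℝ] := ⟨Real.sqrt 2 / 2, 0, Real.sqrt 2 / 2, 0⟩

/-- The golden ratio `τ = (1 + √5)/2`. -/
noncomputable def tau : ℝ := (1 + Real.sqrt 5) / 2

/-- The quaternion `(τ⁻¹ + τ j + k)/2`. -/
noncomputable def iotaQ : ℍ[ℝ] := ⟨tau⁻¹ / 2, 0, tau / 2, 1 / 2⟩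

/-- The cyclic subgroup `C_n` of the unit quaternions, generated by
`ζ_n = cos(2π/n) + sin(2π/n) i`. -/
noncomputable def CyclicQ (n : ℕ) : Subgroup UnitQuat :=
  Subgroup.closure {x : UnitQuat | (x : ℍ[ℝ]) = zetaQ n}

/-- The binary dihedral subgroup `D*₄ₙ` of the unit quaternions, generated by `ζ_{2n}`
and `j`. -/
noncomputable def BinDihQ (n : ℕ) : Subgroup UnitQuat :=
  Subgroup.closure {x : UnitQuat | (x : ℍ[ℝ]) = zetaQ (2 * n) ∨ (x : ℍ[ℝ]) = jQ}

/-- The binary tetrahedral subgroup `T*` of the unit quaternions, generated by `i`, `j`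
and `ω = (1 + i + j + k)/2`. -/
noncomputable def BinTetQ : Subgroup UnitQuat :=
  Subgroup.closure
    {x : UnitQuat | (x : ℍ[ℝ]) = iQ ∨ (x : ℍ[ℝ]) = jQ ∨ (x : ℍ[ℝ]) = omegaQ}

/-- The binary octahedral subgroup `O*` of the unit quaternions, generated by `T*` and
`(√2/2)(1 + j)`. -/
noncomputable def BinOctQ : Subgroup UnitQuat :=
  Subgroup.closure ((BinTetQ : Set UnitQuat) ∪ {x : UnitQuat | (x : ℍ[ℝ]) = sigmaQ})

/-- The binary icosahedral subgroup `I*` of the unit quaternions, generated by `T*` and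
`(τ⁻¹ + τ j + k)/2`. -/
noncomputable def BinIcoQ : Subgroup UnitQuat :=
  Subgroup.closure ((BinTetQ : Set UnitQuat) ∪ {x : UnitQuat | (x : ℍ[ℝ]) = iotaQ})


namespace QC

def c0 (x : UnitQuat) : ℝ := (x : ℍ[ℝ]).re
def c1 (x : UnitQuat) : ℝ := (x : ℍ[ℝ]).imI
def c2 (x : UnitQuat) : ℝ := (x : ℍ[ℝ]).imJ
def c3 (x : UnitQuat) : ℝ := (x : ℍ[ℝ]).imK

lemma coe_iff (x : UnitQuat) (a b c d : ℝ) :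
    (x : ℍ[ℝ]) = ⟨a, b, c, d⟩ ↔ c0 x = a ∧ c1 x = b ∧ c2 x = c ∧ c3 x = d := by
  constructor
  · intro h; simp only [c0, c1, c2, c3, h]; simp
  · rintro ⟨h0, h1, h2, h3⟩; exact Quaternion.ext _ _ h0 h1 h2 h3

lemma uq_ext {x y : UnitQuat} (h0 : c0 x = c0 y) (h1 : c1 x = c1 y)
    (h2 : c2 x = c2 y) (h3 : c3 x = c3 y) : x = y :=
  Subtype.ext (Quaternion.ext _ _ h0 h1 h2 h3)

lemma nsq (x : UnitQuat) : c0 x ^ 2 + c1 x ^ 2 + c2 x ^ 2 + c3 x ^ 2 = 1 := by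
  have h : ‖(x:ℍ[ℝ])‖ = 1 := by simp
  have h2 := Quaternion.normSq_eq_norm_mul_self (x:ℍ[ℝ])
  rw [h, Quaternion.normSq_def'] at h2
  simp only [c0, c1, c2, c3]
  linarith

def mkq (a b c d : ℝ) : ℍ[ℝ] := ⟨a, b, c, d⟩

lemma uq_mk (a b c d : ℝ) (h : a^2 + b^2 + c^2 + d^2 = 1) :
    ∃ x : UnitQuat, c0 x = a ∧ c1 x = b ∧ c2 x = c ∧ c3 x = d := by
  have h2 := Quaternion.normSq_eq_norm_mul_self (mkq a b c d)
  have h3 : ‖mkq a b c d‖ = 1 := by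
    have h4 : a^2 + b^2 + c^2 + d^2 = ‖mkq a b c d‖ * ‖mkq a b c d‖ :=
      (Quaternion.normSq_def' _).symm.trans h2
    nlinarith [norm_nonneg (mkq a b c d)]
  exact ⟨⟨mkq a b c d, by simpa using h3⟩, rfl, rfl, rfl, rfl⟩

@[simp] lemma c0_mul (x y : UnitQuat) : c0 (x * y) = c0 x * c0 y - c1 x * c1 y - c2 x * c2 y - c3 x * c3 y :=
  Quaternion.re_mul (x:ℍ[ℝ]) y
@[simp] lemma c1_mul (x y : UnitQuat) : c1 (x * y) = c0 x * c1 y + c1 x * c0 y + c2 x * c3 y - c3 x * c2 y :=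
  Quaternion.imI_mul (x:ℍ[ℝ]) y
@[simp] lemma c2_mul (x y : UnitQuat) : c2 (x * y) = c0 x * c2 y - c1 x * c3 y + c2 x * c0 y + c3 x * c1 y :=
  Quaternion.imJ_mul (x:ℍ[ℝ]) y
@[simp] lemma c3_mul (x y : UnitQuat) : c3 (x * y) = c0 x * c3 y + c1 x * c2 y - c2 x * c1 y + c3 x * c0 y :=
  Quaternion.imK_mul (x:ℍ[ℝ]) y
@[simp] lemma c0_one : c0 1 = 1 := rfl
@[simp] lemma c1_one : c1 1 = 0 := rfl
@[simp] lemma c2_one : c2 1 = 0 := rfl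
@[simp] lemma c3_one : c3 1 = 0 := rfl
@[simp] lemma c0_neg (x : UnitQuat) : c0 (-x) = - c0 x := rfl
@[simp] lemma c1_neg (x : UnitQuat) : c1 (-x) = - c1 x := rfl
@[simp] lemma c2_neg (x : UnitQuat) : c2 (-x) = - c2 x := rfl
@[simp] lemma c3_neg (x : UnitQuat) : c3 (-x) = - c3 x := rfl

lemma inv_coords (x : UnitQuat) : c0 x⁻¹ = c0 x ∧ c1 x⁻¹ = - c1 x ∧ c2 x⁻¹ = - c2 x ∧ c3 x⁻¹ = - c3 x := by
  have hN := nsq x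
  obtain ⟨y, h0, h1, h2, h3⟩ := uq_mk (c0 x) (- c1 x) (- c2 x) (- c3 x) (by linarith)
  have hy : x⁻¹ = y := by
    apply inv_eq_of_mul_eq_one_right
    apply uq_ext <;> simp [h0, h1, h2, h3] <;> linarith
  rw [hy]
  exact ⟨h0, h1, h2, h3⟩

@[simp] lemma c0_inv (x : UnitQuat) : c0 x⁻¹ = c0 x := (inv_coords x).1
@[simp] lemma c1_inv (x : UnitQuat) : c1 x⁻¹ = -c1 x := (inv_coords x).2.1
@[simp] lemma c2_inv (x : UnitQuat) : c2 x⁻¹ = -c2 x := (inv_coords x).2.2.1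
@[simp] lemma c3_inv (x : UnitQuat) : c3 x⁻¹ = -c3 x := (inv_coords x).2.2.2

lemma eq_one_of_c0 (x : UnitQuat) (h : c0 x = 1) : x = 1 := by
  have hN := nsq x
  rw [h] at hN
  have h1 : c1 x = 0 := by nlinarith [sq_nonneg (c1 x), sq_nonneg (c2 x), sq_nonneg (c3 x)]
  have h2 : c2 x = 0 := by nlinarith [sq_nonneg (c1 x), sq_nonneg (c2 x), sq_nonneg (c3 x)]
  have h3 : c3 x = 0 := by nlinarith [sq_nonneg (c1 x), sq_nonneg (c2 x), sq_nonneg (c3 x)]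
  apply uq_ext <;> simp [h, h1, h2, h3]

lemma conj_of (p q r s : ℝ) (hw : p^2 + q^2 + r^2 + s^2 ≠ 0) : ∃ u : UnitQuat, ∃ l : ℝ,
    c0 u = l * p ∧ c1 u = l * q ∧ c2 u = l * r ∧ c3 u = l * s := by
  have hp : 0 < p^2 + q^2 + r^2 + s^2 := lt_of_le_of_ne (by positivity) hw.symm
  set n := Real.sqrt (p^2 + q^2 + r^2 + s^2) with hn
  have hn2 : n^2 = p^2 + q^2 + r^2 + s^2 := Real.sq_sqrt hp.le
  have hn0 : n ≠ 0 := (Real.sqrt_pos.mpr hp).ne'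
  obtain ⟨u, h⟩ := uq_mk (n⁻¹ * p) (n⁻¹ * q) (n⁻¹ * r) (n⁻¹ * s) (by
    field_simp; linarith)
  exact ⟨u, n⁻¹, h⟩

lemma nf1 (a : UnitQuat) : ∃ u : UnitQuat, 0 ≤ c1 (u * a * u⁻¹) ∧
    c2 (u * a * u⁻¹) = 0 ∧ c3 (u * a * u⁻¹) = 0 := by
  have hN := nsq a
  set t := c0 a with ht
  set x := c1 a with hx
  set y := c2 a with hy
  set z := c3 a with hz
  have hs2 : (Real.sqrt (x^2+y^2+z^2))^2 = x^2+y^2+z^2 := Real.sq_sqrt (by positivity)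
  have hs0 : 0 ≤ Real.sqrt (x^2+y^2+z^2) := Real.sqrt_nonneg _
  set s := Real.sqrt (x^2+y^2+z^2) with hs
  obtain ⟨b, b0, b1, b2, b3⟩ := uq_mk t s 0 0 (by nlinarith)
  suffices h : ∃ u : UnitQuat, u * a = b * u by
    obtain ⟨u, hu⟩ := h
    refine ⟨u, ?_⟩
    rw [mul_inv_eq_iff_eq_mul.mpr hu, b1, b2, b3]
    exact ⟨hs0, rfl, rfl⟩
  by_cases hw : 0^2 + (s + x)^2 + y^2 + z^2 = 0
  · have h1 : s + x = 0 := by nlinarith [sq_nonneg (s + x), sq_nonneg y, sq_nonneg z]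
    have h2 : y = 0 := by nlinarith [sq_nonneg (s + x), sq_nonneg y, sq_nonneg z]
    have h3 : z = 0 := by nlinarith [sq_nonneg (s + x), sq_nonneg y, sq_nonneg z]
    obtain ⟨u, u0, u1, u2, u3⟩ := uq_mk 0 0 1 0 (by norm_num)
    refine ⟨u, ?_⟩
    apply uq_ext <;> simp only [c0_mul, c1_mul, c2_mul, c3_mul, u0, u1, u2, u3, b0, b1, b2, b3, ← hx, ← hy, ← hz, ← ht, h2, h3] <;> linarith
  · obtain ⟨u, l, u0, u1, u2, u3⟩ := conj_of _ _ _ _ hw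
    refine ⟨u, ?_⟩
    apply uq_ext <;> simp only [c0_mul, c1_mul, c2_mul, c3_mul, u0, u1, u2, u3, b0, b1, b2, b3, ← hx, ← hy, ← hz, ← ht]
    · linear_combination l * hs2
    · ring
    · ring
    · ring

lemma nf2 (a b : UnitQuat) (ha2 : c2 a = 0) (ha3 : c3 a = 0) :
    ∃ u : UnitQuat, u * a * u⁻¹ = a ∧ 0 ≤ c2 (u * b * u⁻¹) ∧ c3 (u * b * u⁻¹) = 0 := by
  have hN := nsq b
  set t := c0 b with ht
  set x := c1 b with hx
  set y := c2 b with hy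
  set z := c3 b with hz
  have hs2 : (Real.sqrt (y^2+z^2))^2 = y^2+z^2 := Real.sq_sqrt (by positivity)
  have hs0 : 0 ≤ Real.sqrt (y^2+z^2) := Real.sqrt_nonneg _
  set s := Real.sqrt (y^2+z^2) with hs
  obtain ⟨b', b0, b1, b2, b3⟩ := uq_mk t x s 0 (by nlinarith)
  suffices h : ∃ u : UnitQuat, u * a = a * u ∧ u * b = b' * u by
    obtain ⟨u, hu1, hu⟩ := h
    refine ⟨u, mul_inv_eq_iff_eq_mul.mpr hu1, ?_⟩
    rw [mul_inv_eq_iff_eq_mul.mpr hu, b2, b3]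
    exact ⟨hs0, rfl⟩
  by_cases hw : (s + y)^2 + (-z)^2 + 0^2 + 0^2 = 0
  · have h1 : s + y = 0 := by nlinarith [sq_nonneg (s + y), sq_nonneg z]
    have h3 : z = 0 := by nlinarith [sq_nonneg (s + y), sq_nonneg z]
    obtain ⟨u, u0, u1, u2, u3⟩ := uq_mk 0 1 0 0 (by norm_num)
    refine ⟨u, ?_, ?_⟩
    · apply uq_ext <;> simp only [c0_mul, c1_mul, c2_mul, c3_mul, u0, u1, u2, u3, ha2, ha3] <;> ring
    apply uq_ext <;> simp only [c0_mul, c1_mul, c2_mul, c3_mul, u0, u1, u2, u3, b0, b1, b2, b3, ← hx, ← hy, ← hz, ← ht, h3] <;> linarith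
  · obtain ⟨u, l, u0, u1, u2, u3⟩ := conj_of _ _ _ _ hw
    refine ⟨u, ?_, ?_⟩
    · apply uq_ext <;> simp only [c0_mul, c1_mul, c2_mul, c3_mul, u0, u1, u2, u3, ha2, ha3] <;> ring
    apply uq_ext <;> simp only [c0_mul, c1_mul, c2_mul, c3_mul, u0, u1, u2, u3, b0, b1, b2, b3, ← hx, ← hy, ← hz, ← ht]
    · ring
    · ring
    · linear_combination -l * hs2
    · ring

/-- conjugation preserves real parts -/
lemma conj_re (u a : UnitQuat) : c0 (u * a * u⁻¹) = c0 a := by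
  have hN := nsq u
  simp
  linear_combination c0 a * hN

lemma nf (a b : UnitQuat) : ∃ u : UnitQuat, 0 ≤ c1 (u * a * u⁻¹) ∧
    c2 (u * a * u⁻¹) = 0 ∧ c3 (u * a * u⁻¹) = 0 ∧
    0 ≤ c2 (u * b * u⁻¹) ∧ c3 (u * b * u⁻¹) = 0 := by
  obtain ⟨u, h1, h2, h3⟩ := nf1 a
  obtain ⟨v, k1, k2, k3⟩ := nf2 (u * a * u⁻¹) (u * b * u⁻¹) h2 h3
  have e1 : (v * u) * a * (v * u)⁻¹ = u * a * u⁻¹ := by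
    rw [← k1]; group
  have e2 : (v * u) * b * (v * u)⁻¹ = v * (u * b * u⁻¹) * v⁻¹ := by group
  refine ⟨v * u, ?_⟩
  rw [e1, e2]
  exact ⟨h1, h2, h3, k2, k3⟩

lemma gram_core (A B A' B' : UnitQuat) (h1 : c0 A = c0 A') (h2 : c0 B = c0 B')
    (h3 : c0 (A * B) = c0 (A' * B')) (h4 : c0 A ^ 2 < 1)
    (hs : 0 ≤ c1 A) (ha2 : c2 A = 0) (ha3 : c3 A = 0) (hr : 0 ≤ c2 B) (hb3 : c3 B = 0)
    (hs' : 0 ≤ c1 A') (ha2' : c2 A' = 0) (ha3' : c3 A' = 0) (hr' : 0 ≤ c2 B') (hb3' : c3 B' = 0) :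
    A = A' ∧ B = B' := by
  have e1 := nsq A
  have e2 := nsq B
  have e3 := nsq A'
  have e4 := nsq B'
  simp only [c0_mul, ha2, ha3, hb3, ha2', ha3', hb3', ← h1, ← h2] at e1 e2 e3 e4 h3
  have s2 : c1 A = c1 A' := (sq_eq_sq₀ hs hs').mp (by linarith)
  have s0 : c1 A ≠ 0 := by
    intro h
    rw [h] at e1; linarith
  have x2 : c1 B = c1 B' := by
    have : c1 A * (c1 B - c1 B') = 0 := by
      rw [← s2] at h3; linarith
    rcases mul_eq_zero.mp this with h | h
    · exact absurd h s0
    · linarith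
  have r2 : c2 B = c2 B' := (sq_eq_sq₀ hr hr').mp (by rw [x2] at e2; linarith)
  exact ⟨uq_ext h1 s2 (by rw [ha2, ha2']) (by rw [ha3, ha3']),
    uq_ext h2 x2 r2 (by rw [hb3, hb3'])⟩

lemma gram (a b a' b' : UnitQuat) (h1 : c0 a = c0 a') (h2 : c0 b = c0 b')
    (h3 : c0 (a * b) = c0 (a' * b')) (h4 : c0 a ^ 2 < 1) :
    ∃ u : UnitQuat, u * a * u⁻¹ = a' ∧ u * b * u⁻¹ = b' := by
  obtain ⟨u, hs, ha2, ha3, hr, hb3⟩ := nf a b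
  obtain ⟨v, hs', ha2', ha3', hr', hb3'⟩ := nf a' b'
  have e5 := conj_re u (a * b)
  have e6 := conj_re v (a' * b')
  have f1 := conj_re u a
  have f2 := conj_re u b
  have f3 := conj_re v a'
  have f4 := conj_re v b'
  have k1 : u * (a * b) * u⁻¹ = (u * a * u⁻¹) * (u * b * u⁻¹) := by group
  have k2 : v * (a' * b') * v⁻¹ = (v * a' * v⁻¹) * (v * b' * v⁻¹) := by group
  suffices h : u * a * u⁻¹ = v * a' * v⁻¹ ∧ u * b * u⁻¹ = v * b' * v⁻¹ by
    refine ⟨v⁻¹ * u, ?_, ?_⟩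
    · calc v⁻¹ * u * a * (v⁻¹ * u)⁻¹ = v⁻¹ * (u * a * u⁻¹) * v := by group
        _ = a' := by rw [h.1]; group
    · calc v⁻¹ * u * b * (v⁻¹ * u)⁻¹ = v⁻¹ * (u * b * u⁻¹) * v := by group
        _ = b' := by rw [h.2]; group
  rw [k1] at e5
  rw [k2] at e6
  exact gram_core _ _ _ _ (by rw [f1, f3, h1]) (by rw [f2, f4, h2]) (by rw [e5, e6, h3])
    (by rw [f1]; exact h4) hs ha2 ha3 hr hb3 hs' ha2' ha3' hr' hb3'


/-- The statement to prove. -/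
def Good (G : Subgroup UnitQuat) : Prop :=
    ∃ u : UnitQuat,
      (∃ n : ℕ, 1 ≤ n ∧ Subgroup.map (MulAut.conj u).toMonoidHom G = CyclicQ n) ∨
      (∃ n : ℕ, 2 ≤ n ∧ Subgroup.map (MulAut.conj u).toMonoidHom G = BinDihQ n) ∨
      Subgroup.map (MulAut.conj u).toMonoidHom G = BinTetQ ∨
      Subgroup.map (MulAut.conj u).toMonoidHom G = BinOctQ ∨
      Subgroup.map (MulAut.conj u).toMonoidHom G = BinIcoQ

noncomputable def cj (u : UnitQuat) (G : Subgroup UnitQuat) : Subgroup UnitQuat :=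
  Subgroup.map (MulAut.conj u).toMonoidHom G

lemma mem_cj {u x : UnitQuat} {G : Subgroup UnitQuat} : x ∈ cj u G ↔ u⁻¹ * x * u ∈ G := by
  unfold cj
  rw [Subgroup.mem_map]
  constructor
  · rintro ⟨y, hy, rfl⟩
    have : u⁻¹ * ((MulAut.conj u).toMonoidHom y) * u = y := by
      simp [mul_assoc]
    rwa [this]
  · intro h
    exact ⟨_, h, by simp [mul_assoc]⟩

lemma conj_mem_cj {u x : UnitQuat} {G : Subgroup UnitQuat} (h : x ∈ G) : u * x * u⁻¹ ∈ cj u G := by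
  rw [mem_cj]
  have : u⁻¹ * (u * x * u⁻¹) * u = x := by group
  rwa [this]

lemma cj_cj (u v : UnitQuat) (G : Subgroup UnitQuat) : cj u (cj v G) = cj (u * v) G := by
  ext x
  simp only [mem_cj]
  have : v⁻¹ * (u⁻¹ * x * u) * v = (u * v)⁻¹ * x * (u * v) := by group
  rw [this]

lemma cj_one (G : Subgroup UnitQuat) : cj 1 G = G := by
  ext x; simp [mem_cj]

lemma good_cj (v : UnitQuat) {G : Subgroup UnitQuat} (h : Good (cj v G)) : Good G := by
  obtain ⟨u, hu⟩ := h
  refine ⟨u * v, ?_⟩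
  have : ∀ w (K : Subgroup UnitQuat), Subgroup.map (MulAut.conj w).toMonoidHom K = cj w K := fun _ _ => rfl
  simp only [this, cj_cj] at hu ⊢
  exact hu

lemma cj_finite (u : UnitQuat) {G : Subgroup UnitQuat} (h : Finite G) : Finite (cj u G) := by
  have h1 : Set.Finite (G : Set UnitQuat) := Set.toFinite _
  have h2 : Set.Finite ((cj u G : Subgroup UnitQuat) : Set UnitQuat) := by
    have : ((cj u G : Subgroup UnitQuat) : Set UnitQuat) = (fun x => u * x * u⁻¹) '' G := by
      ext x; simp only [Set.mem_image, SetLike.mem_coe, mem_cj]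
      constructor
      · intro h; exact ⟨_, h, by group⟩
      · rintro ⟨y, hy, rfl⟩
        have : u⁻¹ * (u * y * u⁻¹) * u = y := by group
        rwa [this]
    rw [this]; exact h1.image _
  exact h2.to_subtype

lemma good_of (G : Subgroup UnitQuat) (h :
      (∃ n : ℕ, 1 ≤ n ∧ G = CyclicQ n) ∨ (∃ n : ℕ, 2 ≤ n ∧ G = BinDihQ n) ∨
      G = BinTetQ ∨ G = BinOctQ ∨ G = BinIcoQ) : Good G := by
  refine ⟨1, ?_⟩
  have : ∀ w (K : Subgroup UnitQuat), Subgroup.map (MulAut.conj w).toMonoidHom K = cj w K := fun _ _ => rfl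
  simp only [this, cj_one]
  exact h

lemma cyclic_case (G : Subgroup UnitQuat) (hG : Finite G)
    (h : ∀ x ∈ G, c2 x = 0 ∧ c3 x = 0) : ∃ n : ℕ, 1 ≤ n ∧ G = CyclicQ n ∧ n = Nat.card G := by
  let φ : G →* ℂ :=
    { toFun := fun x => ⟨c0 x, c1 x⟩
      map_one' := by
        apply Complex.ext <;> simp
      map_mul' := by
        intro x y
        have hx := h x x.2
        have hy := h y y.2
        apply Complex.ext <;> simp [hx.1, hx.2] }
  have hφ : Function.Injective φ := by
    intro x y hxy
    have h0 : c0 x = c0 y := congrArg Complex.re hxy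
    have h1 : c1 x = c1 y := congrArg Complex.im hxy
    apply Subtype.ext
    apply uq_ext h0 h1
    · rw [(h x x.2).1, (h y y.2).1]
    · rw [(h x x.2).2, (h y y.2).2]
  have hc : IsCyclic G := isCyclic_of_subgroup_isDomain φ hφ
  obtain ⟨g, hg⟩ := hc.exists_generator
  have hn : 0 < Nat.card G := Nat.card_pos
  have hord : orderOf g = Nat.card G := orderOf_eq_card_of_forall_mem_zpowers hg
  set n := Nat.card G with hnn
  have hζ := Complex.isPrimitiveRoot_exp n hn.ne'
  have hgp : IsPrimitiveRoot (φ g) n := by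
    rw [← hord]
    rw [← orderOf_injective φ hφ g]
    exact IsPrimitiveRoot.orderOf _
  have hne : NeZero n := ⟨hn.ne'⟩
  obtain ⟨i, -, hi⟩ := hgp.eq_pow_of_pow_eq_one hζ.pow_eq_one
  set z : G := g ^ i with hz
  have hφz : φ z = Complex.exp (2 * Real.pi * Complex.I / n) := by
    rw [hz, map_pow, hi]
  have hexp : Complex.exp (2 * Real.pi * Complex.I / n) =
      ⟨Real.cos (2 * Real.pi / n), Real.sin (2 * Real.pi / n)⟩ := by
    have : (2 * Real.pi * Complex.I / n : ℂ) = ((2 * Real.pi / n : ℝ) : ℂ) * Complex.I := by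
      push_cast; ring
    rw [this]
    apply Complex.ext
    · exact Complex.exp_ofReal_mul_I_re _
    · exact Complex.exp_ofReal_mul_I_im _
  have hzc : (((z : UnitQuat)) : ℍ[ℝ]) = zetaQ n := by
    rw [hexp] at hφz
    unfold zetaQ
    rw [coe_iff]
    exact ⟨congrArg Complex.re hφz, congrArg Complex.im hφz, (h z z.2).1, (h z z.2).2⟩
  refine ⟨n, hn, ?_, rfl⟩
  have hset : {x : UnitQuat | (x : ℍ[ℝ]) = zetaQ n} = {(z : UnitQuat)} := by
    ext x
    simp only [Set.mem_ofPred_eq, Set.mem_singleton_iff]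
    rw [← hzc]
    exact ⟨fun h => Subtype.ext h, fun h => by rw [h]⟩
  unfold CyclicQ
  rw [hset]
  apply le_antisymm
  · intro x hx
    have hx1 : (φ ⟨x, hx⟩) ^ n = 1 := by
      rw [← map_pow, hnn, pow_card_eq_one', map_one]
    obtain ⟨k, -, hk⟩ := hζ.eq_pow_of_pow_eq_one hx1
    rw [← hφz, ← map_pow] at hk
    have := hφ hk
    rw [Subgroup.mem_closure_singleton]
    refine ⟨k, ?_⟩
    have h2 := congrArg (Subtype.val) this
    simpa using h2
  · rw [Subgroup.closure_le]
    simp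

/-- Covering argument. -/
lemma cover (H K : Subgroup UnitQuat) (hH : Finite H) (hKH : K ≤ H) (t : ℝ)
    (ht : ∀ x ∈ H, x ≠ 1 → c0 x ≤ t)
    (hc : ∀ q : UnitQuat, (∀ k ∈ K, c0 (q * k) ≤ c0 q) → t < c0 q) : H = K := by
  apply le_antisymm _ hKH
  intro x hx
  have hfin : Set.Finite (K : Set UnitQuat) := Set.Finite.subset (Set.toFinite (H : Set UnitQuat)) hKH
  obtain ⟨k, hk, hmax⟩ := Set.exists_max_image (K : Set UnitQuat) (fun k => c0 (x * k)) hfin ⟨1, K.one_mem⟩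
  have h1 : t < c0 (x * k) := by
    apply hc
    intro k' hk'
    rw [mul_assoc]
    exact hmax _ (K.mul_mem hk hk')
  have h2 : x * k = 1 := by
    by_contra hne
    exact absurd (ht _ (H.mul_mem hx (hKH hk)) hne) (not_le.mpr h1)
  rw [eq_inv_of_mul_eq_one_left h2]
  exact K.inv_mem hk

/-- membership by coordinates -/
def Mem (K : Subgroup UnitQuat) (a b c d : ℝ) : Prop :=
  ∃ x ∈ K, c0 x = a ∧ c1 x = b ∧ c2 x = c ∧ c3 x = d

lemma Mem.mul {K : Subgroup UnitQuat} {a b c d a' b' c' d' : ℝ} (h : Mem K a b c d) (h' : Mem K a' b' c' d') :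
    Mem K (a * a' - b * b' - c * c' - d * d') (a * b' + b * a' + c * d' - d * c')
      (a * c' - b * d' + c * a' + d * b') (a * d' + b * c' - c * b' + d * a') := by
  obtain ⟨x, hx, rfl, rfl, rfl, rfl⟩ := h
  obtain ⟨y, hy, rfl, rfl, rfl, rfl⟩ := h'
  exact ⟨x * y, K.mul_mem hx hy, by simp, by simp, by simp, by simp⟩

lemma Mem.inv {K : Subgroup UnitQuat} {a b c d : ℝ} (h : Mem K a b c d) :
    Mem K a (-b) (-c) (-d) := by
  obtain ⟨x, hx, rfl, rfl, rfl, rfl⟩ := h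
  exact ⟨x⁻¹, K.inv_mem hx, by simp, by simp, by simp, by simp⟩

lemma Mem.of_eq {K : Subgroup UnitQuat} {a b c d a' b' c' d' : ℝ} (h : Mem K a b c d)
    (e0 : a = a') (e1 : b = b') (e2 : c = c') (e3 : d = d') : Mem K a' b' c' d' := by
  subst e0 e1 e2 e3; exact h

lemma Mem.mono {K L : Subgroup UnitQuat} (hKL : K ≤ L) {a b c d : ℝ} (h : Mem K a b c d) :
    Mem L a b c d := by
  obtain ⟨x, hx, h⟩ := h
  exact ⟨x, hKL hx, h⟩

lemma Mem.mem {K : Subgroup UnitQuat} {a b c d : ℝ} (h : Mem K a b c d) {x : UnitQuat}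
    (hx : (x : ℍ[ℝ]) = ⟨a, b, c, d⟩) : x ∈ K := by
  obtain ⟨y, hy, h0, h1, h2, h3⟩ := h
  obtain ⟨k0, k1, k2, k3⟩ := (coe_iff x a b c d).mp hx
  have : x = y := uq_ext (by rw [h0, k0]) (by rw [h1, k1]) (by rw [h2, k2]) (by rw [h3, k3])
  rwa [this]

lemma Mem.ineq {K : Subgroup UnitQuat} {a b c d : ℝ} (h : Mem K a b c d) {q : UnitQuat}
    (hq : ∀ k ∈ K, c0 (q * k) ≤ c0 q) :
    c0 q * a - c1 q * b - c2 q * c - c3 q * d ≤ c0 q := by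
  obtain ⟨y, hy, rfl, rfl, rfl, rfl⟩ := h
  simpa using hq y hy

lemma tet_i : Mem BinTetQ 0 1 0 0 := by
  obtain ⟨x, h⟩ := uq_mk 0 1 0 0 (by norm_num)
  exact ⟨x, Subgroup.subset_closure (Or.inl ((coe_iff x _ _ _ _).mpr h)), h⟩
lemma tet_j : Mem BinTetQ 0 0 1 0 := by
  obtain ⟨x, h⟩ := uq_mk 0 0 1 0 (by norm_num)
  exact ⟨x, Subgroup.subset_closure (Or.inr (Or.inl ((coe_iff x _ _ _ _).mpr h))), h⟩
lemma tet_w : Mem BinTetQ (1/2) (1/2) (1/2) (1/2) := by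
  obtain ⟨x, h⟩ := uq_mk (1/2) (1/2) (1/2) (1/2) (by norm_num)
  exact ⟨x, Subgroup.subset_closure (Or.inr (Or.inr ((coe_iff x _ _ _ _).mpr h))), h⟩

lemma tet_le {H : Subgroup UnitQuat} (h1 : Mem H 0 1 0 0) (h2 : Mem H 0 0 1 0)
    (h3 : Mem H (1/2) (1/2) (1/2) (1/2)) : BinTetQ ≤ H := by
  unfold BinTetQ
  rw [Subgroup.closure_le]
  rintro x (hx | hx | hx)
  · exact h1.mem hx
  · exact h2.mem hx
  · exact h3.mem hx

lemma tet_le_oct : BinTetQ ≤ BinOctQ := fun _ hx => Subgroup.subset_closure (Or.inl hx)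
lemma tet_le_ico : BinTetQ ≤ BinIcoQ := fun _ hx => Subgroup.subset_closure (Or.inl hx)

lemma oct_s : Mem BinOctQ (Real.sqrt 2 / 2) 0 (Real.sqrt 2 / 2) 0 := by
  obtain ⟨x, h⟩ := uq_mk (Real.sqrt 2 / 2) 0 (Real.sqrt 2 / 2) 0 (by
    have := Real.sq_sqrt (show (0:ℝ) ≤ 2 by norm_num); nlinarith)
  exact ⟨x, Subgroup.subset_closure (Or.inr ((coe_iff x _ _ _ _).mpr h)), h⟩

lemma oct_le {H : Subgroup UnitQuat} (h1 : BinTetQ ≤ H)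
    (h2 : Mem H (Real.sqrt 2 / 2) 0 (Real.sqrt 2 / 2) 0) : BinOctQ ≤ H := by
  unfold BinOctQ
  rw [Subgroup.closure_le]
  rintro x (hx | hx)
  · exact h1 hx
  · exact h2.mem hx

lemma tau_sq : tau ^ 2 = tau + 1 := by
  have := Real.sq_sqrt (show (0:ℝ) ≤ 5 by norm_num)
  unfold tau; nlinarith
lemma tau_lt : tau < 1.6181 := by
  have : Real.sqrt 5 < 2.2362 := by rw [Real.sqrt_lt' (by norm_num)]; norm_num
  unfold tau; linarith
lemma lt_tau : 1.618 < tau := by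
  have : 2.236 < Real.sqrt 5 := by apply Real.lt_sqrt_of_sq_lt; norm_num
  unfold tau; linarith
lemma tau_inv : tau⁻¹ = tau - 1 := by
  have h := lt_tau
  have : tau ≠ 0 := by linarith
  have := tau_sq
  field_simp
  linarith

lemma ico_o : Mem BinIcoQ ((tau - 1) / 2) 0 (tau / 2) (1 / 2) := by
  obtain ⟨x, h⟩ := uq_mk ((tau - 1) / 2) 0 (tau / 2) (1 / 2) (by
    have := tau_sq; nlinarith)
  refine ⟨x, Subgroup.subset_closure (Or.inr ?_), h⟩
  have := (coe_iff x _ _ _ _).mpr h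
  rw [← tau_inv] at this
  exact this

lemma ico_le {H : Subgroup UnitQuat} (h1 : BinTetQ ≤ H)
    (h2 : Mem H ((tau - 1) / 2) 0 (tau / 2) (1 / 2)) : BinIcoQ ≤ H := by
  unfold BinIcoQ
  rw [Subgroup.closure_le]
  rintro x (hx | hx)
  · exact h1 hx
  · rw [← tau_inv] at h2; exact h2.mem hx


lemma bd_i : Mem (BinDihQ 2) 0 1 0 0 := by
  obtain ⟨x, h⟩ := uq_mk 0 1 0 0 (by norm_num)
  refine ⟨x, Subgroup.subset_closure (Or.inl ?_), h⟩
  have e : 2 * Real.pi / ((2 * 2 : ℕ) : ℝ) = Real.pi / 2 := by push_cast; ring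
  unfold zetaQ
  rw [coe_iff, e, Real.cos_pi_div_two, Real.sin_pi_div_two]
  exact h

lemma bd_j (n : ℕ) : Mem (BinDihQ n) 0 0 1 0 := by
  obtain ⟨x, h⟩ := uq_mk 0 0 1 0 (by norm_num)
  exact ⟨x, Subgroup.subset_closure (Or.inr ((coe_iff x _ _ _ _).mpr h)), h⟩

lemma bd_le {H : Subgroup UnitQuat} (h1 : Mem H 0 1 0 0) (h2 : Mem H 0 0 1 0) : BinDihQ 2 ≤ H := by
  unfold BinDihQ
  rw [Subgroup.closure_le]
  rintro x (hx | hx)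
  · have e : 2 * Real.pi / ((2 * 2 : ℕ) : ℝ) = Real.pi / 2 := by push_cast; ring
    unfold zetaQ at hx
    rw [e, Real.cos_pi_div_two, Real.sin_pi_div_two] at hx
    exact h1.mem hx
  · exact h2.mem hx

lemma cover_q8 (q : UnitQuat) (hq : ∀ k ∈ BinDihQ 2, c0 (q * k) ≤ c0 q) : 0 < c0 q := by
  have hN := nsq q
  have hi := bd_i
  have hj := bd_j 2
  have hk := hi.mul hj
  have i1 := hi.ineq hq
  have i2 := hi.inv.ineq hq
  have j1 := hj.ineq hq
  have j2 := hj.inv.ineq hq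
  have k1 := hk.ineq hq
  have k2 := hk.inv.ineq hq
  have hr : 0 ≤ c0 q := by linarith
  rcases hr.lt_or_eq with h | h
  · exact h
  · rw [← h] at i1 i2 j1 j2 k1 k2 hN
    have e1 : c1 q = 0 := by linarith
    have e2 : c2 q = 0 := by linarith
    have e3 : c3 q = 0 := by linarith
    rw [e1, e2, e3] at hN
    norm_num at hN

lemma tet_ineq {K : Subgroup UnitQuat} (hK : BinTetQ ≤ K) (q : UnitQuat)
    (hq : ∀ k ∈ K, c0 (q * k) ≤ c0 q) : |c1 q| + |c2 q| + |c3 q| ≤ c0 q := by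
  have hi := tet_i.mono hK
  have hj := tet_j.mono hK
  have hw := tet_w.mono hK
  have hk := hi.mul hj
  have w1 := (hi.mul hw).mul hi.inv
  have w2 := (hj.mul hw).mul hj.inv
  have w3 := (hk.mul hw).mul hk.inv
  have a0 := hw.ineq hq
  have a1 := w1.ineq hq
  have a2 := w2.ineq hq
  have a3 := w3.ineq hq
  have b0 := hw.inv.ineq hq
  have b1 := w1.inv.ineq hq
  have b2 := w2.inv.ineq hq
  have b3 := w3.inv.ineq hq
  norm_num at a0 a1 a2 a3 b0 b1 b2 b3
  rcases abs_cases (c1 q) with ⟨e1, _⟩ | ⟨e1, _⟩ <;>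
  rcases abs_cases (c2 q) with ⟨e2, _⟩ | ⟨e2, _⟩ <;>
  rcases abs_cases (c3 q) with ⟨e3, _⟩ | ⟨e3, _⟩ <;>
  rw [e1, e2, e3] <;> linarith

lemma cover_tet (q : UnitQuat) (hq : ∀ k ∈ BinTetQ, c0 (q * k) ≤ c0 q) : 1/2 < c0 q := by
  have hN := nsq q
  have h := tet_ineq le_rfl q hq
  rw [← sq_abs (c1 q), ← sq_abs (c2 q), ← sq_abs (c3 q)] at hN
  have h1 := abs_nonneg (c1 q)
  have h2 := abs_nonneg (c2 q)
  have h3 := abs_nonneg (c3 q)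
  generalize |c1 q| = x at *
  generalize |c2 q| = y at *
  generalize |c3 q| = z at *
  generalize c0 q = r at *
  have : (x + y + z)^2 ≤ r^2 := by gcongr
  nlinarith [mul_nonneg h1 h2, mul_nonneg h1 h3, mul_nonneg h2 h3]

lemma bound_aux (r x y z m : ℝ) (hr : 0 ≤ r) (hm : 0 ≤ m) (hN : r^2 + x^2 + y^2 + z^2 = 1) (h1 : |x| ≤ m * r) (h2 : |y| ≤ m * r)
    (h3 : |z| ≤ m * r) : 1 ≤ r^2 * (1 + 3 * m^2) := by
  have e1 : x^2 ≤ (m*r)^2 := sq_le_sq' (by linarith [neg_abs_le x]) (by linarith [le_abs_self x])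
  have e2 : y^2 ≤ (m*r)^2 := sq_le_sq' (by linarith [neg_abs_le y]) (by linarith [le_abs_self y])
  have e3 : z^2 ≤ (m*r)^2 := sq_le_sq' (by linarith [neg_abs_le z]) (by linarith [le_abs_self z])
  nlinarith

lemma sq2 : (Real.sqrt 2)^2 = 2 := Real.sq_sqrt (by norm_num)
lemma lt_sq2 : 1.414 < Real.sqrt 2 := by apply Real.lt_sqrt_of_sq_lt; norm_num
lemma sq2_lt : Real.sqrt 2 < 1.415 := by rw [Real.sqrt_lt' (by norm_num)]; norm_num

lemma cover_oct (q : UnitQuat) (hq : ∀ k ∈ BinOctQ, c0 (q * k) ≤ c0 q) : Real.sqrt 2 / 2 < c0 q := by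
  have hN := nsq q
  have h := tet_ineq tet_le_oct q hq
  have hr : 0 ≤ c0 q := by linarith [abs_nonneg (c1 q), abs_nonneg (c2 q), abs_nonneg (c3 q)]
  have hw := tet_w.mono tet_le_oct
  have hs := oct_s
  have hs2 := (hw.mul hs).mul hw.inv
  have hs3 := (hw.inv.mul hs).mul hw.inv.inv
  have a1 := hs.ineq hq
  have a2 := hs2.ineq hq
  have a3 := hs3.ineq hq
  have b1 := hs.inv.ineq hq
  have b2 := hs2.inv.ineq hq
  have b3 := hs3.inv.ineq hq
  have l1 := lt_sq2
  have l2 := sq2_lt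
  have e := sq2
  generalize Real.sqrt 2 = s at *
  ring_nf at a1 a2 a3 b1 b2 b3
  have key : ∀ x, c0 q * s * (1/2) + s * x * (1/2) ≤ c0 q → s * c0 q * (1/2) - s * x * (1/2) ≤ c0 q →
      |x| ≤ (s - 1) * c0 q := by
    intro x h1 h2
    rw [abs_le]
    constructor <;> nlinarith
  have f := bound_aux _ _ _ _ (s - 1) hr (by linarith) hN (key _ (by linarith) (by linarith)) (key _ (by linarith) (by linarith)) (key _ (by linarith) (by linarith))
  nlinarith

lemma ico_base : Mem BinIcoQ (tau / 2) (1 / 2) ((tau - 1) / 2) 0 ∧ Mem BinIcoQ (tau / 2) (1 / 2) (-((tau - 1) / 2)) 0 := by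
  have hj := tet_j.mono tet_le_ico
  have ho := ico_o
  constructor
  · exact (ho.inv.mul hj).of_eq (by ring) (by ring) (by ring) (by ring)
  · exact (ho.mul hj.inv).of_eq (by ring) (by ring) (by ring) (by ring)

lemma cover_ico (q : UnitQuat) (hq : ∀ k ∈ BinIcoQ, c0 (q * k) ≤ c0 q) : tau / 2 < c0 q := by
  have hN := nsq q
  have h := tet_ineq tet_le_ico q hq
  have hr : 0 ≤ c0 q := by linarith [abs_nonneg (c1 q), abs_nonneg (c2 q), abs_nonneg (c3 q)]
  have hw := tet_w.mono tet_le_ico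
  obtain ⟨m1, n1⟩ := ico_base
  have m2 := (hw.mul m1).mul hw.inv
  have m3 := (hw.inv.mul m1).mul hw.inv.inv
  have n2 := (hw.mul n1).mul hw.inv
  have n3 := (hw.inv.mul n1).mul hw.inv.inv
  have a1 := m1.ineq hq
  have a2 := m2.ineq hq
  have a3 := m3.ineq hq
  have b1 := m1.inv.ineq hq
  have b2 := m2.inv.ineq hq
  have b3 := m3.inv.ineq hq
  have a1' := n1.ineq hq
  have a2' := n2.ineq hq
  have a3' := n3.ineq hq
  have b1' := n1.inv.ineq hq
  have b2' := n2.inv.ineq hq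
  have b3' := n3.inv.ineq hq
  have l1 := lt_tau
  have l2 := tau_lt
  have e := tau_sq
  generalize tau = s at *
  ring_nf at a1 a2 a3 b1 b2 b3 a1' a2' a3' b1' b2' b3'
  have f := bound_aux _ _ _ _ (2 - s) hr (by linarith) hN
    (by rw [abs_le]; constructor <;> linarith) (by rw [abs_le]; constructor <;> linarith)
    (by rw [abs_le]; constructor <;> linarith)
  nlinarith

lemma c0_sq (x : UnitQuat) : c0 (x * x) = 2 * c0 x ^ 2 - 1 := by
  have := nsq x; simp; linarith
lemma c1_sq (x : UnitQuat) : c1 (x * x) = 2 * c0 x * c1 x := by simp; ring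
lemma c2_sq (x : UnitQuat) : c2 (x * x) = 2 * c0 x * c2 x := by simp; ring
lemma c3_sq (x : UnitQuat) : c3 (x * x) = 2 * c0 x * c3 x := by simp; ring
lemma c0_cube (x : UnitQuat) : c0 (x * x * x) = 4 * c0 x ^ 3 - 3 * c0 x := by
  have := nsq x
  rw [c0_mul, c0_sq, c1_sq, c2_sq, c3_sq]
  linear_combination (- 2 * c0 x) * this
lemma c0_four (x : UnitQuat) : c0 (x * x * (x * x)) = 8 * c0 x ^ 4 - 8 * c0 x ^ 2 + 1 := by
  rw [c0_sq, c0_sq]; ring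
lemma c0_five (x : UnitQuat) : c0 (x * x * (x * x) * x) = 16 * c0 x ^ 5 - 20 * c0 x ^ 3 + 5 * c0 x := by
  have := nsq x
  rw [c0_mul, c0_sq, c1_sq, c2_sq, c3_sq, c0_sq, c1_sq, c2_sq, c3_sq]
  linear_combination (-4 * c0 x * (2 * c0 x ^ 2 - 1)) * this

lemma c0_comm (a b : UnitQuat) : c0 (a * b * a⁻¹ * b⁻¹) =
    2 * c0 a ^ 2 + 2 * c0 b ^ 2 + 2 * c0 (a * b) ^ 2 - 4 * c0 a * c0 b * c0 (a * b) - 1 := by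
  have ha := nsq a
  have hb := nsq b
  simp only [c0_mul, c1_mul, c2_mul, c3_mul, c0_inv, c1_inv, c2_inv, c3_inv]
  linear_combination (2 * c0 b ^ 2 - (c0 b ^ 2 + c1 b ^ 2 + c2 b ^ 2 + c3 b ^ 2)) * ha + (2 * c0 a ^ 2 - 1) * hb

lemma t_cases (t : ℝ) (h0 : 0 ≤ t) (h1 : t < 1) (hc : 4 * t^2 - 1 - 2 * t^4 ≤ t)
    (P2 : 1 - 2 * t^2 ≤ t ∨ 1 - 2 * t^2 = 1)
    (P3 : 3 * t - 4 * t^3 ≤ t ∨ 3 * t - 4 * t^3 = 1)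
    (P4 : -(8 * t^4 - 8 * t^2 + 1) ≤ t ∨ -(8 * t^4 - 8 * t^2 + 1) = 1)
    (P5 : -(16 * t^5 - 20 * t^3 + 5 * t) ≤ t ∨ -(16 * t^5 - 20 * t^3 + 5 * t) = 1) :
    t = 0 ∨ t = 1/2 ∨ t = Real.sqrt 2 / 2 ∨ t = tau / 2 := by
  rcases lt_trichotomy t (1/2) with h | h | h
  · left
    rcases P2 with p | p
    · nlinarith
    · nlinarith
  · right; left; exact h
  right; right
  have h2 : 1/2 ≤ t^2 := by
    rcases P3 with p | p
    · by_contra hh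
      push Not at hh
      nlinarith [mul_pos (show 0 < t by linarith) (show 0 < 1/2 - t^2 by linarith)]
    · exfalso
      have : (t + 1) * (2 * t - 1)^2 = 0 := by linarith
      have : 0 < (t + 1) * (2 * t - 1)^2 := by
        have : 0 < 2 * t - 1 := by linarith
        positivity
      linarith
  rcases h2.eq_or_lt with h3 | h3
  · left
    have : t^2 = (Real.sqrt 2 / 2)^2 := by rw [div_pow, sq2]; linarith
    exact (sq_eq_sq₀ h0 (by positivity)).mp this
  right
  have h4 : t^2 < 3/4 := by
    by_contra hh
    push Not at hh
    have k : (1 - t) * (1 - 2 * (1 - t^2) * (1 + t)) ≤ 0 := by linarith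
    have k2 : 0 < 1 - 2 * (1 - t^2) * (1 + t) := by nlinarith
    nlinarith [mul_pos (show 0 < 1 - t by linarith) k2]
  have h5 : 4 * t^2 - 2 * t - 1 = 0 := by
    rcases P5 with p | p
    · exfalso
      have k : 0 ≤ 2 * t * ((4 * t^2 - 3) * (2 * t^2 - 1)) := by linarith
      have k2 : (4 * t^2 - 3) * (2 * t^2 - 1) < 0 := mul_neg_of_neg_of_pos (by linarith) (by linarith)
      nlinarith
    · have : (t + 1) * (4 * t^2 - 2 * t - 1)^2 = 0 := by linarith
      rcases mul_eq_zero.mp this with k | k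
      · linarith
      · exact pow_eq_zero_iff (by norm_num) |>.mp k
  have e := tau_sq
  have l := lt_tau
  have : (2 * t - tau) * (2 * t - (1 - tau)) = 0 := by linarith
  rcases mul_eq_zero.mp this with k | k
  · linarith
  · linarith

lemma x_oct (X s : ℝ) (hs : s^2 = 1/2) (l1 : 0.707 < s) (l2 : s < 0.7075) (hX : X ≤ s) (hX2 : 1 - s ≤ X)
    (P3 : 3 * X - 4 * X^3 ≤ s ∨ 3 * X - 4 * X^3 = 1) : X = 1/2 ∨ X = s := by
  rcases P3 with p | p
  · right
    have k : 0 ≤ (X - s) * (4 * X^2 + 4 * s * X - 1) := by nlinarith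
    have k2 : 0 < 4 * X^2 + 4 * s * X - 1 := by nlinarith
    nlinarith
  · left
    have : (X + 1) * (2 * X - 1)^2 = 0 := by linarith
    rcases mul_eq_zero.mp this with k | k
    · linarith
    · have := pow_eq_zero_iff (by norm_num) |>.mp k
      linarith

lemma x_ico (X s : ℝ) (hs : s^2 = s + 1) (l1 : 1.618 < s) (l2 : s < 1.6181) (hX : X ≤ s / 2) (hX2 : 1 / 2 ≤ X)
    (P3 : 3 * X - 4 * X^3 ≤ s / 2 ∨ 3 * X - 4 * X^3 = 1)
    (P4 : -(8 * X^4 - 8 * X^2 + 1) ≤ s / 2 ∨ -(8 * X^4 - 8 * X^2 + 1) = 1) :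
    X = 1/2 ∨ X = s / 2 ∨ X^2 = 1/2 := by
  rcases hX2.eq_or_lt with h | h
  · left; exact h.symm
  right
  rcases P4 with p | p
  · left
    have hX3 : 0.66 ≤ X := by
      rcases P3 with p | p
      · by_contra hh
        push Not at hh
        nlinarith [mul_pos (sub_pos.mpr h) (sub_pos.mpr hh), mul_pos (mul_pos (sub_pos.mpr h) (sub_pos.mpr hh)) (show 0 < X by linarith)]
      · have : (X + 1) * (2 * X - 1)^2 = 0 := by linarith
        have : 0 < (X + 1) * (2 * X - 1)^2 := by
          have : 0 < 2 * X - 1 := by linarith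
          positivity
        linarith
    have k : 0 ≤ (X^2 - (s+1)/4) * (X^2 - (3-s)/4) := by nlinarith
    have k2 : 0 < X^2 - (3-s)/4 := by nlinarith
    have k3 : (s+1)/4 ≤ X^2 := by
      by_contra hh
      push Not at hh
      nlinarith
    nlinarith
  · right
    have : (2 * X^2 - 1)^2 = 0 := by linarith
    have := pow_eq_zero_iff (by norm_num) |>.mp this
    linarith


lemma setup (H : Subgroup UnitQuat) (hH : Finite H) (t : ℝ) (ht : ∀ x ∈ H, x ≠ 1 → c0 x ≤ t)
    (a b : UnitQuat) (ha : a ∈ H) (hb : b ∈ H) (p0 p1 p2 p3 q0 q1 q2 q3 : ℝ)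
    (hp : p0^2 + p1^2 + p2^2 + p3^2 = 1) (hq : q0^2 + q1^2 + q2^2 + q3^2 = 1)
    (h1 : c0 a = p0) (h2 : c0 b = q0) (h3 : c0 (a * b) = p0 * q0 - p1 * q1 - p2 * q2 - p3 * q3)
    (h4 : p0^2 < 1) : ∃ u, Finite (cj u H) ∧ (∀ x ∈ cj u H, x ≠ 1 → c0 x ≤ t) ∧
      Mem (cj u H) p0 p1 p2 p3 ∧ Mem (cj u H) q0 q1 q2 q3 := by
  obtain ⟨a', a0, a1, a2, a3⟩ := uq_mk _ _ _ _ hp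
  obtain ⟨b', b0, b1, b2, b3⟩ := uq_mk _ _ _ _ hq
  obtain ⟨u, hu, hv⟩ := gram a b a' b' (by rw [h1, a0]) (by rw [h2, b0])
    (by rw [h3, c0_mul, a0, a1, a2, a3, b0, b1, b2, b3]) (by rw [h1]; exact h4)
  refine ⟨u, cj_finite u hH, ?_, ⟨a', ?_, a0, a1, a2, a3⟩, ⟨b', ?_, b0, b1, b2, b3⟩⟩
  · intro x hx hx1
    rw [mem_cj] at hx
    have h := conj_re u⁻¹ x
    rw [inv_inv] at h
    rw [← h]
    apply ht _ hx
    intro h1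
    apply hx1
    calc x = u * (u⁻¹ * x * u) * u⁻¹ := by group
      _ = 1 := by rw [h1]; group
  · rw [← hu]; exact conj_mem_cj ha
  · rw [← hv]; exact conj_mem_cj hb

lemma neg_mem_of {H : Subgroup UnitQuat} (hn : ∀ x ∈ H, -x ∈ H) {t : ℝ}
    (ht : ∀ x ∈ H, x ≠ 1 → c0 x ≤ t) (x : UnitQuat) (hx : x ∈ H) :
    -c0 x ≤ t ∨ -c0 x = 1 := by
  have h := hn x hx
  by_cases h1 : -x = 1
  · right; rw [← c0_neg, h1, c0_one]
  · left; rw [← c0_neg]; exact ht _ h h1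

lemma case_q8 (H : Subgroup UnitQuat) (hH : Finite H) (ht : ∀ x ∈ H, x ≠ 1 → c0 x ≤ 0)
    (a b : UnitQuat) (ha : a ∈ H) (hb : b ∈ H) (h1 : c0 a = 0) (h2 : c0 b = 0)
    (h3 : c0 (a * b) = 0) : Good H := by
  obtain ⟨u, hf, hu, hA, hB⟩ := setup H hH 0 ht a b ha hb 0 1 0 0 0 0 1 0 (by norm_num)
    (by norm_num) h1 h2 (by rw [h3]; norm_num) (by norm_num)
  apply good_cj u
  apply good_of
  right; left
  exact ⟨2, le_rfl, cover _ _ hf (bd_le hA hB) 0 hu cover_q8⟩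

lemma case_tet (H : Subgroup UnitQuat) (hH : Finite H) (ht : ∀ x ∈ H, x ≠ 1 → c0 x ≤ 1/2)
    (a b : UnitQuat) (ha : a ∈ H) (hb : b ∈ H) (h1 : c0 a = 1/2) (h2 : c0 b = 1/2)
    (h3 : c0 (a * b) = 0) : Good H := by
  obtain ⟨u, hf, hu, hA, hB⟩ := setup H hH _ ht a b ha hb (1/2) (1/2) (1/2) (1/2)
    (1/2) (1/2) (1/2) (-1/2) (by norm_num)
    (by norm_num) h1 h2 (by rw [h3]; norm_num) (by norm_num)
  apply good_cj u
  apply good_of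
  right; right; left
  have hi : Mem (cj u H) 0 1 0 0 := (hB.mul hA).of_eq (by norm_num) (by norm_num) (by norm_num) (by norm_num)
  have hj : Mem (cj u H) 0 0 1 0 := (hA.mul hB).of_eq (by norm_num) (by norm_num) (by norm_num) (by norm_num)
  exact cover _ _ hf (tet_le hi hj hA) _ hu cover_tet

lemma case_oct (H : Subgroup UnitQuat) (hH : Finite H) (ht : ∀ x ∈ H, x ≠ 1 → c0 x ≤ √2/2)
    (a b : UnitQuat) (ha : a ∈ H) (hb : b ∈ H) (h1 : c0 a = √2/2) (h2 : c0 b = √2/2)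
    (h3 : c0 (a * b) = 1/2) : Good H := by
  have hs := sq2
  obtain ⟨u, hf, hu, hA, hB⟩ := setup H hH _ ht a b ha hb (√2/2) (√2/2) 0 0
    (√2/2) 0 (√2/2) 0 (by linarith) (by linarith) h1 h2 (by rw [h3]; linarith) (by linarith)
  apply good_cj u
  apply good_of
  right; right; right; left
  have hi : Mem (cj u H) 0 1 0 0 := (hA.mul hA).of_eq (by linarith) (by linarith) (by linarith) (by linarith)
  have hj : Mem (cj u H) 0 0 1 0 := (hB.mul hB).of_eq (by linarith) (by linarith) (by linarith) (by linarith)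
  have hw : Mem (cj u H) (1/2) (1/2) (1/2) (1/2) :=
    (hA.mul hB).of_eq (by linarith) (by linarith) (by linarith) (by linarith)
  exact cover _ _ hf (oct_le (tet_le hi hj hw) hB) _ hu cover_oct

lemma case_ico (H : Subgroup UnitQuat) (hH : Finite H) (ht : ∀ x ∈ H, x ≠ 1 → c0 x ≤ tau/2)
    (a b : UnitQuat) (ha : a ∈ H) (hb : b ∈ H) (h1 : c0 a = tau/2) (h2 : c0 b = tau/2)
    (h3 : c0 (a * b) = 1/2) : Good H := by
  have hs := tau_sq
  have hs3 : tau^3 = 2 * tau + 1 := by linear_combination (tau + 1) * hs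
  have l1 := lt_tau
  have l2 := tau_lt
  obtain ⟨u, hf, hu, hA, hB⟩ := setup H hH _ ht a b ha hb (tau/2) (1/2) ((tau-1)/2) 0
    (tau/2) 0 (1/2) ((tau-1)/2) (by linarith) (by linarith) h1 h2 (by rw [h3]; linarith) (by nlinarith)
  apply good_cj u
  apply good_of
  right; right; right; right
  have hw : Mem (cj u H) (1/2) (1/2) (1/2) (1/2) :=
    (hA.mul hB).of_eq (by linarith) (by linarith) (by linarith) (by linarith)
  have hBB : Mem (cj u H) ((tau-1)/2) 0 (tau/2) (1/2) :=
    (hB.mul hB).of_eq (by linarith) (by linarith) (by linarith) (by linarith)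
  have hAA : Mem (cj u H) ((tau-1)/2) (tau/2) (1/2) 0 :=
    (hA.mul hA).of_eq (by linarith) (by linarith) (by linarith) (by linarith)
  have hj : Mem (cj u H) 0 0 1 0 :=
    (hBB.mul hA).of_eq (by linarith) (by linarith) (by linarith) (by linarith)
  have hi : Mem (cj u H) 0 1 0 0 :=
    ((hA.mul hB.inv).mul hAA).of_eq (by linarith) (by linarith) (by linarith) (by linarith)
  exact cover _ _ hf (ico_le (tet_le hi hj hw) hBB) _ hu cover_ico

lemma case2 (H : Subgroup UnitQuat) (hH : Finite H) (hn : ∀ x ∈ H, -x ∈ H) (t : ℝ)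
    (ht : ∀ x ∈ H, x ≠ 1 → c0 x ≤ t) (h0 : 0 ≤ t) (hlt : t < 1)
    (a b : UnitQuat) (ha : a ∈ H) (hb : b ∈ H) (h1 : c0 a = t) (h2 : c0 b = t)
    (hab : a * b ≠ b * a) : Good H := by
  have P2 : ∀ x ∈ H, 1 - 2 * c0 x^2 ≤ t ∨ 1 - 2 * c0 x^2 = 1 := by
    intro x hx
    have := neg_mem_of hn ht (x * x) (H.mul_mem hx hx)
    rw [c0_sq] at this
    rcases this with h | h
    · left; linarith
    · right; linarith
  have P3 : ∀ x ∈ H, 3 * c0 x - 4 * c0 x^3 ≤ t ∨ 3 * c0 x - 4 * c0 x^3 = 1 := by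
    intro x hx
    have := neg_mem_of hn ht (x * x * x) (H.mul_mem (H.mul_mem hx hx) hx)
    rw [c0_cube] at this
    rcases this with h | h
    · left; linarith
    · right; linarith
  have P4 : ∀ x ∈ H, -(8 * c0 x^4 - 8 * c0 x^2 + 1) ≤ t ∨ -(8 * c0 x^4 - 8 * c0 x^2 + 1) = 1 := by
    intro x hx
    have := neg_mem_of hn ht (x * x * (x * x)) (H.mul_mem (H.mul_mem hx hx) (H.mul_mem hx hx))
    rwa [c0_four] at this
  have P5 := neg_mem_of hn ht (a * a * (a * a) * a)
    (H.mul_mem (H.mul_mem (H.mul_mem ha ha) (H.mul_mem ha ha)) ha)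
  rw [c0_five] at P5
  have hb' := H.inv_mem hb
  have h2' : c0 b⁻¹ = t := by simp [h2]
  have hX := H.mul_mem ha hb
  have hY := H.mul_mem ha hb'
  have hXY : c0 (a * b) + c0 (a * b⁻¹) = 2 * t^2 := by
    simp [h1, h2]; ring
  have hXt : c0 (a * b) ≤ t := by
    apply ht _ hX
    intro h
    apply hab
    rw [eq_inv_of_mul_eq_one_left h]; simp
  have hYt : c0 (a * b⁻¹) ≤ t := by
    apply ht _ hY
    intro h
    apply hab
    rw [mul_inv_eq_one.mp h]
  have hC : c0 (a * b * a⁻¹ * b⁻¹) ≤ t := by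
    apply ht _ (H.mul_mem (H.mul_mem hX (H.inv_mem ha)) hb')
    intro h
    apply hab
    calc a * b = (a * b * a⁻¹ * b⁻¹) * (b * a) := by group
      _ = b * a := by rw [h, one_mul]
  rw [c0_comm, h1, h2] at hC
  have PX2 := P2 _ hX
  have PX3 := P3 _ hX
  have PY3 := P3 _ hY
  have PX4 := P4 _ hX
  have PY4 := P4 _ hY
  have Pa2 := P2 _ ha
  have Pa3 := P3 _ ha
  have Pa4 := P4 _ ha
  rw [h1] at Pa2 Pa3 Pa4 P5
  have tc := t_cases t h0 hlt (by nlinarith [sq_nonneg (c0 (a * b) - t^2)]) Pa2 Pa3 Pa4 P5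
  set X := c0 (a * b) with hXdef
  set Y := c0 (a * b⁻¹) with hYdef
  clear_value X Y
  rcases tc with h | h | h | h
  · subst h
    exact case_q8 H hH ht a b ha hb h1 h2 (by rw [← hXdef]; nlinarith)
  · subst h
    have hX0 : 0 ≤ X := by linarith
    have : X = 0 ∨ X = 1/2 := by
      rcases PX2 with p | p
      · right; nlinarith
      · left; nlinarith
    rcases this with h | h
    · exact case_tet H hH ht a b ha hb h1 h2 (by rw [← hXdef]; exact h)
    · exact case_tet H hH ht a b⁻¹ ha hb' h1 h2' (by rw [← hYdef]; linarith)
  · have hs := sq2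
    have l1 := lt_sq2
    have l2 := sq2_lt
    have ht2 : t^2 = 1/2 := by rw [h]; linarith
    have e1 := x_oct X t ht2 (by rw [h]; linarith) (by rw [h]; linarith) hXt (by linarith) PX3
    have e2 := x_oct Y t ht2 (by rw [h]; linarith) (by rw [h]; linarith) hYt (by linarith) PY3
    have l3 : 0.707 < t := by rw [h]; linarith
    subst h
    refine case_oct H hH ht a b ha hb h1 h2 ?_
    rw [← hXdef]
    rcases e1 with e | e
    · exact e
    · rcases e2 with e' | e' <;> linarith
  · have hs := tau_sq
    have l1 := lt_tau
    have l2 := tau_lt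
    subst h
    have e1 := x_ico X tau hs l1 l2 hXt (by nlinarith) PX3 PX4
    have e2 := x_ico Y tau hs l1 l2 hYt (by nlinarith) PY3 PY4
    have : X = 1/2 ∨ Y = 1/2 := by
      rcases e1 with e | e | e
      · left; exact e
      · right; linarith
      · rcases e2 with e' | e' | e'
        · right; exact e'
        · left; linarith
        · exfalso
          have k1 : X < 0.7072 := by nlinarith
          have k2 : Y < 0.7072 := by nlinarith
          have k3 : 0.707 < X := by nlinarith
          have k4 : 0.707 < Y := by nlinarith
          linarith
    rcases this with h | h
    · exact case_ico H hH ht a b ha hb h1 h2 (by rw [← hXdef]; exact h)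
    · exact case_ico H hH ht a b⁻¹ ha hb' h1 h2' (by rw [← hYdef]; exact h)

lemma comm_axis {a y : UnitQuat} (a1 : c1 a ≠ 0) (a2 : c2 a = 0) (a3 : c3 a = 0)
    (hc : a * y = y * a) : c2 y = 0 ∧ c3 y = 0 := by
  constructor
  · have := congrArg c3 hc
    rw [c3_mul, c3_mul, a2, a3] at this
    have h' : c1 a * c2 y = 0 := by linarith
    exact (mul_eq_zero.mp h').resolve_left a1
  · have := congrArg c2 hc
    rw [c2_mul, c2_mul, a2, a3] at this
    have h' : c1 a * c3 y = 0 := by linarith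
    exact (mul_eq_zero.mp h').resolve_left a1

lemma axis_comm {a y : UnitQuat} (a2 : c2 a = 0) (a3 : c3 a = 0) (y2 : c2 y = 0) (y3 : c3 y = 0) :
    a * y = y * a := by
  apply uq_ext
  · rw [c0_mul, c0_mul]; ring
  · rw [c1_mul, c1_mul, a2, a3, y2, y3]; ring
  · rw [c2_mul, c2_mul, a2, a3, y2, y3]; ring
  · rw [c3_mul, c3_mul, a2, a3, y2, y3]; ring

lemma mul_neg_q (x y : UnitQuat) : x * -y = -(x * y) := by
  apply uq_ext <;> simp only [c0_mul, c1_mul, c2_mul, c3_mul, c0_neg, c1_neg, c2_neg, c3_neg] <;> ring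

lemma neg_mul_q (x y : UnitQuat) : -x * y = -(x * y) := by
  apply uq_ext <;> simp only [c0_mul, c1_mul, c2_mul, c3_mul, c0_neg, c1_neg, c2_neg, c3_neg] <;> ring

lemma nn (x : UnitQuat) : - -x = x := by
  apply uq_ext <;> simp only [c0_neg, c1_neg, c2_neg, c3_neg, neg_neg]

lemma dichotomy (a h : UnitQuat) (a1 : c1 a ≠ 0) (a2 : c2 a = 0) (a3 : c3 a = 0)
    (hc : a * (h * a * h⁻¹) = (h * a * h⁻¹) * a) :
    (c2 h = 0 ∧ c3 h = 0) ∨ (c0 h = 0 ∧ c1 h = 0) := by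
  obtain ⟨e2, e3⟩ := comm_axis a1 a2 a3 hc
  simp [a2, a3] at e2 e3
  have f2 : c1 a * (c1 h * c2 h + c0 h * c3 h) = 0 := by linarith
  have f3 : c1 a * (c1 h * c3 h - c0 h * c2 h) = 0 := by linarith
  have g2 := (mul_eq_zero.mp f2).resolve_left a1
  have g3 := (mul_eq_zero.mp f3).resolve_left a1
  have : (c0 h ^ 2 + c1 h ^ 2) * (c2 h ^ 2 + c3 h ^ 2) = 0 := by
    linear_combination (c1 h * c2 h + c0 h * c3 h) * g2 + (c1 h * c3 h - c0 h * c2 h) * g3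
  rcases mul_eq_zero.mp this with k | k
  · right; constructor <;> nlinarith
  · left; constructor <;> nlinarith

/-- Unit quaternions in the complex plane. -/
def axis : Subgroup UnitQuat where
  carrier := {x | c2 x = 0 ∧ c3 x = 0}
  one_mem' := by simp
  mul_mem' := by
    rintro x y ⟨h1, h2⟩ ⟨h3, h4⟩
    constructor <;> simp [h1, h2, h3, h4]
  inv_mem' := by
    rintro x ⟨h1, h2⟩
    constructor <;> simp [h1, h2]

lemma mem_axis {x : UnitQuat} : x ∈ axis ↔ c2 x = 0 ∧ c3 x = 0 := Iff.rfl

lemma case_dih (H : Subgroup UnitQuat) (hH : Finite H) (hn : ∀ x ∈ H, -x ∈ H) (a j : UnitQuat)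
    (ha : a ∈ H) (hj : j ∈ H) (a1 : c1 a ≠ 0) (a2 : c2 a = 0) (a3 : c3 a = 0)
    (j0 : c0 j = 0) (j1 : c1 j = 0) (j2 : c2 j = 1) (j3 : c3 j = 0)
    (hd : ∀ h ∈ H, (c2 h = 0 ∧ c3 h = 0) ∨ (c0 h = 0 ∧ c1 h = 0)) : Good H := by
  have hfs : Set.Finite (H : Set UnitQuat) := Set.toFinite _
  have hAf : Finite (H ⊓ axis : Subgroup UnitQuat) :=
    (hfs.subset (fun x hx => hx.1)).to_subtype
  obtain ⟨N, hN, hA, hcard⟩ := cyclic_case (H ⊓ axis) hAf (fun x hx => hx.2)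
  have m1 : (-1 : UnitQuat) ∈ H ⊓ axis := ⟨hn 1 H.one_mem, by simp [mem_axis]⟩
  have ne1 : (-1 : UnitQuat) ≠ 1 := by
    intro h
    have := congrArg c0 h
    simp at this; norm_num at this
  have heven : 2 ∣ N := by
    have h1 : orderOf (⟨-1, m1⟩ : (H ⊓ axis : Subgroup UnitQuat)) = 2 := by
      apply orderOf_eq_prime
      · apply Subtype.ext
        rw [pow_two]
        change (-1 : UnitQuat) * -1 = 1
        rw [mul_neg_q, mul_one, nn]
      · intro h
        exact ne1 (congrArg Subtype.val h)
    rw [hcard, ← h1]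
    exact orderOf_dvd_natCard _
  obtain ⟨n, rfl⟩ := heven
  have hn2 : 2 ≤ n := by
    by_contra hlt
    have hle : Nat.card (H ⊓ axis : Subgroup UnitQuat) ≤ 2 := by omega
    have : Fintype (H ⊓ axis : Subgroup UnitQuat) := Fintype.ofFinite _
    rw [Nat.card_eq_fintype_card] at hle
    have h3 : 2 < Fintype.card (H ⊓ axis : Subgroup UnitQuat) := by
      rw [Fintype.two_lt_card_iff]
      refine ⟨1, ⟨-1, m1⟩, ⟨a, ha, a2, a3⟩, ?_, ?_, ?_⟩
      · intro h; exact ne1 (congrArg Subtype.val h).symm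
      · intro h
        have := congrArg c1 (congrArg Subtype.val h)
        simp at this
        exact a1 this.symm
      · intro h
        have := congrArg c1 (congrArg Subtype.val h)
        simp at this
        exact a1 this.symm
    omega
  apply good_of
  right; left
  refine ⟨n, hn2, ?_⟩
  have hcyc : CyclicQ (2 * n) ≤ BinDihQ n := by
    apply Subgroup.closure_mono
    intro x hx
    exact Or.inl hx
  have hjm : j ∈ BinDihQ n := by
    apply Subgroup.subset_closure
    right
    unfold jQ
    rw [coe_iff]
    exact ⟨j0, j1, j2, j3⟩
  apply le_antisymm
  · intro x hx
    rcases hd x hx with h | h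
    · apply hcyc
      rw [← hA]
      exact ⟨hx, h⟩
    · have : j⁻¹ * x ∈ H ⊓ axis := by
        refine ⟨H.mul_mem (H.inv_mem hj) hx, ?_⟩
        apply mem_axis.mpr
        constructor <;> simp [j0, j1, j2, j3, h.1, h.2]
      rw [hA] at this
      have h2 := (BinDihQ n).mul_mem hjm (hcyc this)
      rwa [mul_inv_cancel_left] at h2
  · unfold BinDihQ
    rw [Subgroup.closure_le]
    rintro x (hx | hx)
    · have : x ∈ CyclicQ (2 * n) := Subgroup.subset_closure hx
      rw [← hA] at this
      exact this.1
    · have : x = j := by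
        apply Subtype.ext
        rw [hx]
        symm
        unfold jQ
        rw [coe_iff]
        exact ⟨j0, j1, j2, j3⟩
      rw [this]; exact hj

lemma cj_neg {H : Subgroup UnitQuat} (hn : ∀ x ∈ H, -x ∈ H) (u : UnitQuat) : ∀ x ∈ cj u H, -x ∈ cj u H := by
  intro x hx
  rw [mem_cj] at hx ⊢
  have : u⁻¹ * -x * u = -(u⁻¹ * x * u) := by
    rw [mul_neg_q, neg_mul_q]
  rw [this]
  exact hn _ hx

lemma case1 (H : Subgroup UnitQuat) (hH : Finite H) (hn : ∀ x ∈ H, -x ∈ H) (a : UnitQuat)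
    (ha : a ∈ H) (hlt : c0 a ^ 2 < 1)
    (hc : ∀ h ∈ H, a * (h * a * h⁻¹) = (h * a * h⁻¹) * a) : Good H := by
  have hex : ∃ b ∈ H, (a * b = b * a → ∀ h ∈ H, a * h = h * a) := by
    by_cases h : ∀ h ∈ H, a * h = h * a
    · exact ⟨a, ha, fun _ => h⟩
    · push Not at h
      obtain ⟨b, hb, h⟩ := h
      exact ⟨b, hb, fun h' => absurd h' h⟩
  obtain ⟨b, hb, hab⟩ := hex
  obtain ⟨u, ha1, ha2, ha3, hb2, hb3⟩ := nf a b
  apply good_cj u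
  have hca : c0 (u * a * u⁻¹) = c0 a := conj_re u a
  have hA1 : c1 (u * a * u⁻¹) ≠ 0 := by
    intro h
    have := nsq (u * a * u⁻¹)
    rw [hca, h, ha2, ha3] at this
    linarith
  have hconj : ∀ h, h ∈ cj u H → ∃ k ∈ H, h = u * k * u⁻¹ := by
    intro h hh
    rw [mem_cj] at hh
    exact ⟨_, hh, by group⟩
  have hd : ∀ h ∈ cj u H, (c2 h = 0 ∧ c3 h = 0) ∨ (c0 h = 0 ∧ c1 h = 0) := by
    intro h hh
    apply dichotomy _ h hA1 ha2 ha3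
    obtain ⟨k, hk, rfl⟩ := hconj h hh
    have e := hc k hk
    calc u * a * u⁻¹ * (u * k * u⁻¹ * (u * a * u⁻¹) * (u * k * u⁻¹)⁻¹)
        = u * (a * (k * a * k⁻¹)) * u⁻¹ := by group
      _ = u * ((k * a * k⁻¹) * a) * u⁻¹ := by rw [e]
      _ = _ := by group
  have hA := conj_mem_cj (u := u) ha
  have hB := conj_mem_cj (u := u) hb
  rcases hd _ hB with h | h
  · have hab' : a * b = b * a := by
      have e := axis_comm ha2 ha3 h.1 h.2
      calc a * b = u⁻¹ * ((u * a * u⁻¹) * (u * b * u⁻¹)) * u := by group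
        _ = u⁻¹ * ((u * b * u⁻¹) * (u * a * u⁻¹)) * u := by rw [e]
        _ = b * a := by group
    have hall := hab hab'
    obtain ⟨n, h1, h2, -⟩ := cyclic_case (cj u H) (cj_finite u hH) (by
      intro x hx
      obtain ⟨k, hk, rfl⟩ := hconj x hx
      have e : (u * a * u⁻¹) * (u * k * u⁻¹) = (u * k * u⁻¹) * (u * a * u⁻¹) := by
        calc _ = u * (a * k) * u⁻¹ := by group
          _ = u * (k * a) * u⁻¹ := by rw [hall k hk]
          _ = _ := by group
      exact comm_axis hA1 ha2 ha3 e)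
    exact good_of _ (Or.inl ⟨n, h1, h2⟩)
  · have hb2' : c2 (u * b * u⁻¹) = 1 := by
      have := nsq (u * b * u⁻¹)
      rw [h.1, h.2, hb3] at this
      nlinarith
    exact case_dih _ (cj_finite u hH) (cj_neg hn u) _ _ hA hB hA1 ha2 ha3 h.1 h.2 hb2' hb3 hd

lemma good_neg (H : Subgroup UnitQuat) (hH : Finite H) (hn : ∀ x ∈ H, -x ∈ H) : Good H := by
  have hfs : Set.Finite (H : Set UnitQuat) := Set.toFinite _
  by_cases hall : ∀ x ∈ H, c0 x ^ 2 = 1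
  · obtain ⟨n, h1, h2, -⟩ := cyclic_case H hH (by
      intro x hx
      have h1 := hall x hx
      have h2 := nsq x
      constructor <;> nlinarith [sq_nonneg (c1 x), sq_nonneg (c2 x), sq_nonneg (c3 x)])
    exact good_of _ (Or.inl ⟨n, h1, h2⟩)
  · push Not at hall
    obtain ⟨x, hx, hx1⟩ := hall
    obtain ⟨a, ⟨ha, ha1⟩, hmax⟩ := Set.exists_max_image {y | y ∈ H ∧ c0 y ^ 2 ≠ 1} c0
      (hfs.subset (fun y hy => hy.1)) ⟨x, hx, hx1⟩
    have hneg := hmax (-a) ⟨hn a ha, by simpa using ha1⟩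
    rw [c0_neg] at hneg
    have h0 : 0 ≤ c0 a := by linarith
    have hN := nsq a
    have hlt : c0 a ^ 2 < 1 := lt_of_le_of_ne
      (by nlinarith [sq_nonneg (c1 a), sq_nonneg (c2 a), sq_nonneg (c3 a)]) ha1
    have hlt' : c0 a < 1 := by nlinarith
    have ht : ∀ x ∈ H, x ≠ 1 → c0 x ≤ c0 a := by
      intro y hy hy1
      by_cases h : c0 y ^ 2 = 1
      · rcases (mul_self_eq_one_iff.mp (by rw [← h]; ring)) with h | h
        · exact absurd (eq_one_of_c0 y h) hy1
        · linarith
      · exact hmax y ⟨hy, h⟩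
    by_cases hc : ∀ h ∈ H, a * (h * a * h⁻¹) = (h * a * h⁻¹) * a
    · exact case1 H hH hn a ha hlt hc
    · push Not at hc
      obtain ⟨h, hh, hne⟩ := hc
      exact case2 H hH hn (c0 a) ht h0 hlt' a (h * a * h⁻¹) ha
        (H.mul_mem (H.mul_mem hh ha) (H.inv_mem hh)) rfl (conj_re h a) hne

/-- The subgroup `G ∪ -G`. -/
def dbl (G : Subgroup UnitQuat) : Subgroup UnitQuat where
  carrier := {x | x ∈ G ∨ -x ∈ G}
  one_mem' := Or.inl G.one_mem
  mul_mem' := by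
    rintro x y (h1 | h1) (h2 | h2)
    · exact Or.inl (G.mul_mem h1 h2)
    · right; rw [← mul_neg_q]; exact G.mul_mem h1 h2
    · right; rw [← neg_mul_q]; exact G.mul_mem h1 h2
    · left
      have h3 := G.mul_mem h1 h2
      rwa [mul_neg_q, neg_mul_q, nn] at h3
  inv_mem' := by
    have e : ∀ x : UnitQuat, (-x)⁻¹ = -x⁻¹ := by
      intro x; apply uq_ext <;> simp only [c0_inv, c1_inv, c2_inv, c3_inv, c0_neg, c1_neg, c2_neg, c3_neg]
    rintro x (h | h)
    · exact Or.inl (G.inv_mem h)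
    · right; rw [← e]; exact G.inv_mem h

lemma mem_dbl {G : Subgroup UnitQuat} {x : UnitQuat} : x ∈ dbl G ↔ x ∈ G ∨ -x ∈ G := Iff.rfl

lemma neg_one_mem {G : Subgroup UnitQuat} {u : UnitQuat} {b c d : ℝ} (h : Mem (cj u (dbl G)) 0 b c d) :
    (-1 : UnitQuat) ∈ G := by
  obtain ⟨x, hx, h0, -⟩ := h
  rw [mem_cj, mem_dbl] at hx
  set y := u⁻¹ * x * u with hy
  have hy0 : c0 y = 0 := by
    have := conj_re u⁻¹ x
    rw [inv_inv] at this
    rw [hy, this, h0]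
  have hyy : y * y = -1 := by
    have hN := nsq y
    apply uq_ext
    · rw [c0_sq, hy0]; simp
    · rw [c1_sq, hy0]; simp
    · rw [c2_sq, hy0]; simp
    · rw [c3_sq, hy0]; simp
  have hyy' : -y * -y = -1 := by
    rw [mul_neg_q, neg_mul_q, nn, hyy]
  rcases hx with h | h
  · rw [← hyy]; exact G.mul_mem h h
  · rw [← hyy']; exact G.mul_mem h h

lemma main (G : Subgroup UnitQuat) (hG : Finite G) : Good G := by
  have hfs : Set.Finite (G : Set UnitQuat) := Set.toFinite _
  by_cases hm : (-1 : UnitQuat) ∈ G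
  · apply good_neg G hG
    intro x hx
    have : -x = -1 * x := by rw [neg_mul_q, one_mul]
    rw [this]; exact G.mul_mem hm hx
  · have hD : Finite (dbl G) := by
      have : Set.Finite ((dbl G : Subgroup UnitQuat) : Set UnitQuat) := by
        apply (hfs.union (hfs.image (fun x => -x))).subset
        rintro x (h | h)
        · exact Or.inl h
        · exact Or.inr ⟨-x, h, nn x⟩
      exact this.to_subtype
    obtain ⟨u, hu⟩ := good_neg (dbl G) hD (by
      rintro x (h | h)
      · right; rw [nn]; exact h
      · left; exact h)
    have hrw : ∀ w (K : Subgroup UnitQuat), Subgroup.map (MulAut.conj w).toMonoidHom K = cj w K := fun _ _ => rfl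
    simp only [hrw] at hu
    rcases hu with ⟨n, hn, h⟩ | ⟨n, hn, h⟩ | h | h | h
    · have hax : CyclicQ n ≤ axis := by
        unfold CyclicQ
        rw [Subgroup.closure_le]
        intro x hx
        have hx' : (x : ℍ[ℝ]) = zetaQ n := hx
        unfold zetaQ at hx'
        rw [coe_iff] at hx'
        exact hx'.2.2
      apply good_cj u
      obtain ⟨m, h1, h2, -⟩ := cyclic_case (cj u G) (cj_finite u hG) (by
        intro x hx
        apply mem_axis.mp
        apply hax
        rw [← h]
        rw [mem_cj] at hx ⊢
        exact Or.inl hx)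
      exact good_of _ (Or.inl ⟨m, h1, h2⟩)
    · have := bd_j n
      rw [← h] at this
      exact absurd (neg_one_mem this) hm
    · have := tet_i
      rw [← h] at this
      exact absurd (neg_one_mem this) hm
    · have := tet_i.mono tet_le_oct
      rw [← h] at this
      exact absurd (neg_one_mem this) hm
    · have := tet_i.mono tet_le_ico
      rw [← h] at this
      exact absurd (neg_one_mem this) hm

end QC

/-- Every finite subgroup of the group of unit quaternions is conjugate, by some unit
quaternion, to a cyclic group `C_n` (`n ≥ 1`), a binary dihedral group `D*₄ₙ` (`n ≥ 2`),
the binary tetrahedral group `T*`, the binary octahedral group `O*`, or the binary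
icosahedral group `I*`. -/
theorem stmt13 (G : Subgroup UnitQuat) (hG : Finite G) :
    ∃ u : UnitQuat,
      (∃ n : ℕ, 1 ≤ n ∧ Subgroup.map (MulAut.conj u).toMonoidHom G = CyclicQ n) ∨
      (∃ n : ℕ, 2 ≤ n ∧ Subgroup.map (MulAut.conj u).toMonoidHom G = BinDihQ n) ∨
      Subgroup.map (MulAut.conj u).toMonoidHom G = BinTetQ ∨
      Subgroup.map (MulAut.conj u).toMonoidHom G = BinOctQ ∨
      Subgroup.map (MulAut.conj u).toMonoidHom G = BinIcoQ := by
  exact QC.main G hG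
end

section
/- Under the 2-to-1 homomorphism ρ from the unit quaternions to the rotation group of the purely imaginary quaternions, the image ρ(D*₄ₙ) is isomorphic to the dihedral group of order 2n (for n ≥ 2), the image ρ(T*) is isomorphic to the alternating group A₄, the image ρ(O*) is isomorphic to the symmetric group S₄, and the image ρ(I*) is isomorphic to the alternating group A₅; moreover the kernel of the restriction of ρ to each of these four subgroups is {1, −1}, so each is a central extension by a group of order 2 of the dihedral, tetrahedral, octahedral and icosahedral group respectively. -/
open Quaternion
open scoped Quaternion

/-- The 3-dimensional real subspace `W` of purely imaginary quaternions. -/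
def W : Submodule ℝ ℍ[ℝ] where
  carrier := {h : ℍ[ℝ] | h.re = 0}
  add_mem' := by
    intro a b ha hb
    simp only [Set.mem_setOf_eq] at *
    simp [ha, hb]
  zero_mem' := by simp
  smul_mem' := by
    intro c a ha
    simp only [Set.mem_setOf_eq] at *
    simp [ha]

theorem comps {x y : ℍ[ℝ]} (h : x = y) :
    x.re = y.re ∧ x.imI = y.imI ∧ x.imJ = y.imJ ∧ x.imK = y.imK := by
  subst h; simp

theorem mem_unit {a : ℍ[ℝ]} (h : a.re ^ 2 + a.imI ^ 2 + a.imJ ^ 2 + a.imK ^ 2 = 1) :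
    a ∈ Metric.sphere (0 : ℍ[ℝ]) 1 := by
  rw [mem_sphere_zero_iff_norm]
  have h1 := Quaternion.normSq_eq_norm_mul_self a
  rw [Quaternion.normSq_def', h] at h1
  nlinarith [norm_nonneg a]

theorem tau_sq : tau ^ 2 = tau + 1 := by
  have := Real.sq_sqrt (show (0 : ℝ) ≤ 5 by norm_num)
  unfold tau; nlinarith

theorem one_lt_tau : 1 < tau := by
  have : (1 : ℝ) < Real.sqrt 5 := by
    rw [Real.lt_sqrt] <;> norm_num
  unfold tau; linarith

theorem tau_lt_two : tau < 2 := by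
  nlinarith [tau_sq, one_lt_tau]

theorem tau_inv : tau⁻¹ = tau - 1 := by
  have := one_lt_tau
  have := tau_sq
  rw [inv_eq_iff_eq_inv, eq_comm, inv_eq_iff_eq_inv, eq_comm]
  apply inv_eq_of_mul_eq_one_right
  nlinarith

/-- `i` as a unit quaternion. -/
def uI : UnitQuat := ⟨iQ, mem_unit (by simp [iQ])⟩
/-- `j` as a unit quaternion. -/
def uJ : UnitQuat := ⟨jQ, mem_unit (by simp [jQ])⟩
/-- `ω` as a unit quaternion. -/
noncomputable def uO : UnitQuat := ⟨omegaQ, mem_unit (by norm_num [omegaQ])⟩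
/-- The extra octahedral generator. -/
noncomputable def uS : UnitQuat := ⟨sigmaQ, mem_unit (by
  have := Real.sq_sqrt (show (0 : ℝ) ≤ 2 by norm_num)
  simp only [sigmaQ]; nlinarith)⟩
/-- The extra icosahedral generator. -/
noncomputable def uT : UnitQuat := ⟨iotaQ, mem_unit (by
  have := tau_sq
  simp only [iotaQ, tau_inv]; nlinarith)⟩

theorem binTet_eq : BinTetQ = Subgroup.closure {uI, uJ, uO} := by
  unfold BinTetQ
  congr 1
  ext x
  simp [Subtype.ext_iff, uI, uJ, uO]

theorem binOct_eq : BinOctQ = Subgroup.closure {uI, uJ, uO, uS} := by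
  have h : {x : UnitQuat | (x : ℍ[ℝ]) = sigmaQ} = {uS} := by
    ext x; simp [Subtype.ext_iff, uS]
  rw [BinOctQ, h, Subgroup.closure_union, Subgroup.closure_eq, binTet_eq, ← Subgroup.closure_union]
  congr 1
  ext x
  simp
  tauto

theorem binIco_eq : BinIcoQ = Subgroup.closure {uI, uJ, uO, uT} := by
  have h : {x : UnitQuat | (x : ℍ[ℝ]) = iotaQ} = {uT} := by
    ext x; simp [Subtype.ext_iff, uT]
  rw [BinIcoQ, h, Subgroup.closure_union, Subgroup.closure_eq, binTet_eq, ← Subgroup.closure_union]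
  congr 1
  ext x
  simp
  tauto

theorem real_unit {x : ℍ[ℝ]} (hx : x ∈ Metric.sphere (0 : ℍ[ℝ]) 1)
    (h : x.imI = 0 ∧ x.imJ = 0 ∧ x.imK = 0) : x = 1 ∨ x = -1 := by
  rw [mem_sphere_zero_iff_norm] at hx
  have h1 := Quaternion.normSq_eq_norm_mul_self x
  obtain ⟨ha, hb, hc⟩ := h
  rw [Quaternion.normSq_def', hx, ha, hb, hc] at h1
  have h2 : (x.re - 1) * (x.re + 1) = 0 := by nlinarith
  rcases mul_eq_zero.1 h2 with h3 | h3
  · left; ext <;> simp [ha, hb, hc]; linarith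
  · right; ext <;> simp [ha, hb, hc]; linarith

theorem ker_iff (ρ : UnitQuat →* (W ≃ₗᵢ[ℝ] W))
    (hρ : ∀ (q : UnitQuat) (h : W),
      ((ρ q) h : ℍ[ℝ]) = (q : ℍ[ℝ]) * (h : ℍ[ℝ]) * (q : ℍ[ℝ])⁻¹) (x : UnitQuat) :
    ρ x = 1 ↔ ((x : ℍ[ℝ]) = 1 ∨ (x : ℍ[ℝ]) = -1) := by
  have hx0 : (x : ℍ[ℝ]) ≠ 0 := by
    intro h
    have := x.2
    rw [mem_sphere_zero_iff_norm, h] at this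
    simp at this
  constructor
  · intro h
    apply real_unit x.2
    have hi : (iQ : ℍ[ℝ]) ∈ W := by
      show iQ.re = 0
      rfl
    have hj : (jQ : ℍ[ℝ]) ∈ W := by
      show jQ.re = 0
      rfl
    have h1 := hρ x ⟨iQ, hi⟩
    have h2 := hρ x ⟨jQ, hj⟩
    rw [h] at h1 h2
    simp only [LinearIsometryEquiv.coe_one, id_eq] at h1 h2
    rw [eq_mul_inv_iff_mul_eq₀ hx0] at h1 h2
    have h1j := congrArg QuaternionAlgebra.imJ h1
    have h1k := congrArg QuaternionAlgebra.imK h1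
    have h2k := congrArg QuaternionAlgebra.imK h2
    simp only [Quaternion.re_mul, Quaternion.imI_mul, Quaternion.imJ_mul, Quaternion.imK_mul] at h1j h1k h2k
    simp [iQ, jQ] at h1j h1k h2k
    refine ⟨?_, ?_, ?_⟩ <;> linarith
  · intro h
    ext v : 2
    rw [hρ]
    rcases h with h | h <;> simp [h]

theorem iso_of_graph {G K L : Type*} [Group G] [Group K] [Group L] (ρ : G →* L)
    (R : Subgroup (G × K)) (H : Subgroup G) (M : Subgroup K)
    (hH : R.map (MonoidHom.fst G K) = H) (hM : R.map (MonoidHom.snd G K) = M)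
    (hk : ∀ p ∈ R, ρ p.1 = 1 ↔ p.2 = 1) : Nonempty (Subgroup.map ρ H ≃* M) := by
  let f : R →* L := (ρ.comp (MonoidHom.fst G K)).comp R.subtype
  let g : R →* K := (MonoidHom.snd G K).comp R.subtype
  have hf : f.range = Subgroup.map ρ H := by
    rw [← hH, Subgroup.map_map, MonoidHom.range_comp, Subgroup.range_subtype]
  have hg : g.range = M := by
    rw [← hM, MonoidHom.range_comp, Subgroup.range_subtype]
  have hfg : f.ker = g.ker := by
    ext p
    exact hk p.1 p.2
  exact ⟨(MulEquiv.subgroupCongr hf.symm).trans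
    ((QuotientGroup.quotientKerEquivRange f).symm.trans
    ((QuotientGroup.quotientMulEquivOfEq hfg).trans
    ((QuotientGroup.quotientKerEquivRange g).trans (MulEquiv.subgroupCongr hg))))⟩

theorem iso_perm {N : ℕ} (ρ : UnitQuat →* (W ≃ₗᵢ[ℝ] W))
    (hρ : ∀ (q : UnitQuat) (h : W),
      ((ρ q) h : ℍ[ℝ]) = (q : ℍ[ℝ]) * (h : ℍ[ℝ]) * (q : ℍ[ℝ])⁻¹)
    (w : Fin N → Fin N → ℍ[ℝ]) (S : Set (UnitQuat × Equiv.Perm (Fin N)))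
    (hS : ∀ p ∈ S, ∀ a b, SemiconjBy (p.1 : ℍ[ℝ]) (w a b) (w (p.2 a) (p.2 b)))
    (hspan : ∀ q : ℍ[ℝ], (∀ a b, q * w a b = w a b * q) →
      q.imI = 0 ∧ q.imJ = 0 ∧ q.imK = 0)
    (hinj : ∀ σ : Equiv.Perm (Fin N), (∀ a b, w a b = w (σ a) (σ b)) → σ = 1)
    (H : Subgroup UnitQuat) (M : Subgroup (Equiv.Perm (Fin N)))
    (hH : H = Subgroup.closure (Prod.fst '' S)) (hM : M = Subgroup.closure (Prod.snd '' S)) :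
    Nonempty (Subgroup.map ρ H ≃* M) := by
  have hR : ∀ p ∈ Subgroup.closure S, ∀ a b,
      SemiconjBy (p.1 : ℍ[ℝ]) (w a b) (w (p.2 a) (p.2 b)) := by
    intro p hp
    induction hp using Subgroup.closure_induction with
    | mem x hx => exact hS x hx
    | one => intro a b; simp
    | mul x y _ _ hx hy =>
      intro a b
      have := (hx (y.2 a) (y.2 b)).mul_left (hy a b)
      simpa using this
    | inv x _ hx =>
      intro a b
      have := (hx (x.2⁻¹ a) (x.2⁻¹ b)).inv_symm_left₀
      simpa using this
  apply iso_of_graph ρ (Subgroup.closure S) H M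
  · rw [MonoidHom.map_closure, hH]; rfl
  · rw [MonoidHom.map_closure, hM]; rfl
  · intro p hp
    have h := hR p hp
    rw [ker_iff ρ hρ]
    constructor
    · intro h1
      apply hinj
      intro a b
      have := h a b
      rcases h1 with h1 | h1 <;> simpa [h1, SemiconjBy] using this
    · intro h1
      apply real_unit p.1.2
      apply hspan
      intro a b
      have := h a b
      simpa [h1, SemiconjBy] using this

/-- Edge midpoints of the cube, labelled by ordered pairs of diagonals. -/
noncomputable def w4 : Fin 4 → Fin 4 → ℍ[ℝ] :=
  ![![0, ⟨0, 0, 1, -1⟩, ⟨0, -1, 0, 1⟩, ⟨0, 1, -1, 0⟩],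
    ![⟨0, 0, -1, 1⟩, 0, ⟨0, 1, 1, 0⟩, ⟨0, -1, 0, -1⟩],
    ![⟨0, 1, 0, -1⟩, ⟨0, -1, -1, 0⟩, 0, ⟨0, 0, 1, 1⟩],
    ![⟨0, -1, 1, 0⟩, ⟨0, 1, 0, 1⟩, ⟨0, 0, -1, -1⟩, 0]]

/-- Vertices of the dodecahedron, labelled by ordered pairs of inscribed frames. -/
noncomputable def w5 : Fin 5 → Fin 5 → ℍ[ℝ] :=
  ![![0, ⟨0, 1, 1, 1⟩, ⟨0, 1, -1, -1⟩, ⟨0, -1, 1, -1⟩, ⟨0, -1, -1, 1⟩],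
    ![⟨0, -1, -1, -1⟩, 0, ⟨0, 0, 1-tau, tau⟩, ⟨0, tau, 0, 1-tau⟩, ⟨0, 1-tau, tau, 0⟩],
    ![⟨0, -1, 1, 1⟩, ⟨0, 0, tau-1, -tau⟩, 0, ⟨0, 1-tau, -tau, 0⟩, ⟨0, tau, 0, tau-1⟩],
    ![⟨0, 1, -1, 1⟩, ⟨0, -tau, 0, tau-1⟩, ⟨0, tau-1, tau, 0⟩, 0, ⟨0, 0, 1-tau, -tau⟩],
    ![⟨0, 1, 1, -1⟩, ⟨0, tau-1, -tau, 0⟩, ⟨0, -tau, 0, 1-tau⟩, ⟨0, 0, tau-1, tau⟩, 0]]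

/-- Permutation of the diagonals given by `i`. -/
def pI : Equiv.Perm (Fin 4) := ⟨![1, 0, 3, 2], ![1, 0, 3, 2], by decide, by decide⟩
/-- Permutation of the diagonals given by `j`. -/
def pJ : Equiv.Perm (Fin 4) := ⟨![2, 3, 0, 1], ![2, 3, 0, 1], by decide, by decide⟩
/-- Permutation of the diagonals given by `ω`. -/
def pO : Equiv.Perm (Fin 4) := ⟨![0, 2, 3, 1], ![0, 3, 1, 2], by decide, by decide⟩
/-- Permutation of the diagonals given by the octahedral generator. -/
def pS : Equiv.Perm (Fin 4) := ⟨![3, 0, 1, 2], ![1, 2, 3, 0], by decide, by decide⟩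

/-- Permutation of the frames given by `i`. -/
def rI : Equiv.Perm (Fin 5) := ⟨![0, 2, 1, 4, 3], ![0, 2, 1, 4, 3], by decide, by decide⟩
/-- Permutation of the frames given by `j`. -/
def rJ : Equiv.Perm (Fin 5) := ⟨![0, 3, 4, 1, 2], ![0, 3, 4, 1, 2], by decide, by decide⟩
/-- Permutation of the frames given by `ω`. -/
def rO : Equiv.Perm (Fin 5) := ⟨![0, 1, 3, 4, 2], ![0, 1, 4, 2, 3], by decide, by decide⟩
/-- Permutation of the frames given by the icosahedral generator. -/
def rT : Equiv.Perm (Fin 5) := ⟨![1, 4, 0, 2, 3], ![2, 0, 3, 4, 1], by decide, by decide⟩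

theorem semI4 (a b : Fin 4) : SemiconjBy (uI : ℍ[ℝ]) (w4 a b) (w4 (pI a) (pI b)) := by
  unfold SemiconjBy
  ext <;> simp only [Quaternion.re_mul, Quaternion.imI_mul, Quaternion.imJ_mul,
    Quaternion.imK_mul] <;>
    fin_cases a <;> fin_cases b <;> simp [uI, iQ, w4, pI]

theorem semJ4 (a b : Fin 4) : SemiconjBy (uJ : ℍ[ℝ]) (w4 a b) (w4 (pJ a) (pJ b)) := by
  unfold SemiconjBy
  ext <;> simp only [Quaternion.re_mul, Quaternion.imI_mul, Quaternion.imJ_mul,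
    Quaternion.imK_mul] <;>
    fin_cases a <;> fin_cases b <;> simp [uJ, jQ, w4, pJ]

theorem semO4 (a b : Fin 4) : SemiconjBy (uO : ℍ[ℝ]) (w4 a b) (w4 (pO a) (pO b)) := by
  unfold SemiconjBy
  ext <;> simp only [Quaternion.re_mul, Quaternion.imI_mul, Quaternion.imJ_mul,
    Quaternion.imK_mul] <;>
    fin_cases a <;> fin_cases b <;> simp [uO, omegaQ, w4, pO] <;> ring

theorem semS4 (a b : Fin 4) : SemiconjBy (uS : ℍ[ℝ]) (w4 a b) (w4 (pS a) (pS b)) := by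
  unfold SemiconjBy
  ext <;> simp only [Quaternion.re_mul, Quaternion.imI_mul, Quaternion.imJ_mul,
    Quaternion.imK_mul] <;>
    fin_cases a <;> fin_cases b <;> simp [uS, sigmaQ, w4, pS] <;> ring

theorem semI5 (a b : Fin 5) : SemiconjBy (uI : ℍ[ℝ]) (w5 a b) (w5 (rI a) (rI b)) := by
  unfold SemiconjBy
  ext <;> simp only [Quaternion.re_mul, Quaternion.imI_mul, Quaternion.imJ_mul,
    Quaternion.imK_mul] <;>
    fin_cases a <;> fin_cases b <;> simp [uI, iQ, w5, rI]

theorem semJ5 (a b : Fin 5) : SemiconjBy (uJ : ℍ[ℝ]) (w5 a b) (w5 (rJ a) (rJ b)) := by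
  unfold SemiconjBy
  ext <;> simp only [Quaternion.re_mul, Quaternion.imI_mul, Quaternion.imJ_mul,
    Quaternion.imK_mul] <;>
    fin_cases a <;> fin_cases b <;> simp [uJ, jQ, w5, rJ]

theorem semO5 (a b : Fin 5) : SemiconjBy (uO : ℍ[ℝ]) (w5 a b) (w5 (rO a) (rO b)) := by
  unfold SemiconjBy
  ext <;> simp only [Quaternion.re_mul, Quaternion.imI_mul, Quaternion.imJ_mul,
    Quaternion.imK_mul] <;>
    fin_cases a <;> fin_cases b <;> simp [uO, omegaQ, w5, rO] <;> ring

theorem semT5 (a b : Fin 5) : SemiconjBy (uT : ℍ[ℝ]) (w5 a b) (w5 (rT a) (rT b)) := by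
  have := tau_sq
  unfold SemiconjBy
  ext <;> simp only [Quaternion.re_mul, Quaternion.imI_mul, Quaternion.imJ_mul,
    Quaternion.imK_mul] <;>
    fin_cases a <;> fin_cases b <;> simp [uT, iotaQ, w5, rT, tau_inv] <;> grind

theorem span4 (q : ℍ[ℝ]) (h : ∀ a b, q * w4 a b = w4 a b * q) :
    q.imI = 0 ∧ q.imJ = 0 ∧ q.imK = 0 := by
  have h1 := comps (h 0 1)
  have h2 := comps (h 1 2)
  have h3 := comps (h 2 3)
  simp only [Quaternion.re_mul, Quaternion.imI_mul, Quaternion.imJ_mul,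
    Quaternion.imK_mul] at h1 h2 h3
  simp [w4] at h1 h2 h3
  grind

theorem span5 (q : ℍ[ℝ]) (h : ∀ a b, q * w5 a b = w5 a b * q) :
    q.imI = 0 ∧ q.imJ = 0 ∧ q.imK = 0 := by
  have h1 := comps (h 0 1)
  have h2 := comps (h 0 2)
  have h3 := comps (h 0 3)
  simp only [Quaternion.re_mul, Quaternion.imI_mul, Quaternion.imJ_mul,
    Quaternion.imK_mul] at h1 h2 h3
  simp [w5] at h1 h2 h3
  grind

theorem inj4_aux (b c d : Fin 4) (hb : b ≠ 0) (h : w4 0 b = w4 c d) : c = 0 ∧ d = b := by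
  replace h := comps h
  fin_cases b <;> fin_cases c <;> fin_cases d <;>
    simp [w4] at hb h ⊢ <;> norm_num at h

theorem inj5_aux (b c d : Fin 5) (hb : b ≠ 0) (h : w5 0 b = w5 c d) : c = 0 ∧ d = b := by
  replace h := comps h
  have := one_lt_tau
  have := tau_lt_two
  fin_cases b <;> fin_cases c <;> fin_cases d <;>
    simp [w5] at hb h ⊢ <;> grind

theorem inj4 (σ : Equiv.Perm (Fin 4)) (h : ∀ a b, w4 a b = w4 (σ a) (σ b)) : σ = 1 := by
  ext b : 1
  by_cases hb : b = 0
  · rw [hb]; exact (inj4_aux 1 _ _ (by decide) (h 0 1)).1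
  · exact (inj4_aux b _ _ hb (h 0 b)).2

theorem inj5 (σ : Equiv.Perm (Fin 5)) (h : ∀ a b, w5 a b = w5 (σ a) (σ b)) : σ = 1 := by
  ext b : 1
  by_cases hb : b = 0
  · rw [hb]; exact (inj5_aux 1 _ _ (by decide) (h 0 1)).1
  · exact (inj5_aux b _ _ hb (h 0 b)).2

set_option maxRecDepth 100000 in
theorem gen_A4 (σ : Equiv.Perm (Fin 4)) (h : Equiv.Perm.sign σ = 1) :
    ∃ a b : Fin 2, ∃ c : Fin 3, σ = pI ^ (a : ℕ) * pJ ^ (b : ℕ) * pO ^ (c : ℕ) := by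
  revert σ
  decide

set_option maxRecDepth 100000 in
theorem gen_S4 (σ : Equiv.Perm (Fin 4)) : ∃ d a b : Fin 2, ∃ c : Fin 3,
    σ = pS ^ (d : ℕ) * (pI ^ (a : ℕ) * pJ ^ (b : ℕ) * pO ^ (c : ℕ)) := by
  revert σ
  decide

theorem clo_A4 : alternatingGroup (Fin 4) = Subgroup.closure {pI, pJ, pO} := by
  apply le_antisymm
  · intro σ hσ
    obtain ⟨a, b, c, rfl⟩ := gen_A4 σ hσ
    refine mul_mem (mul_mem (pow_mem ?_ _) (pow_mem ?_ _)) (pow_mem ?_ _) <;>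
      exact Subgroup.subset_closure (by simp)
  · rw [Subgroup.closure_le]
    rintro σ (rfl | rfl | rfl) <;> (show Equiv.Perm.sign _ = 1; decide)

theorem clo_S4 : (⊤ : Subgroup (Equiv.Perm (Fin 4))) = Subgroup.closure {pI, pJ, pO, pS} := by
  apply le_antisymm _ le_top
  intro σ hσ
  obtain ⟨d, a, b, c, rfl⟩ := gen_S4 σ
  refine mul_mem (pow_mem ?_ _) (mul_mem (mul_mem (pow_mem ?_ _) (pow_mem ?_ _)) (pow_mem ?_ _)) <;>
    exact Subgroup.subset_closure (by simp)

theorem clo_A5 : alternatingGroup (Fin 5) = Subgroup.closure {rI, rJ, rO, rT} := by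
  apply le_antisymm
  · have hT : rT ∈ Subgroup.closure {rI, rJ, rO, rT} := Subgroup.subset_closure (by simp)
    have hO : rO ∈ Subgroup.closure {rI, rJ, rO, rT} := Subgroup.subset_closure (by simp)
    have htr : MulAction.IsPretransitive (Subgroup.closure {rI, rJ, rO, rT}) (Fin 5) := by
      refine ⟨fun x y => ?_⟩
      have h : ∀ x y : Fin 5, ∃ d : Fin 5, (rT ^ (d : ℕ)) x = y := by decide
      obtain ⟨d, hd⟩ := h x y
      exact ⟨⟨rT ^ (d : ℕ), pow_mem hT _⟩, hd⟩
    have hprim : MulAction.IsPreprimitive (Subgroup.closure {rI, rJ, rO, rT}) (Fin 5) :=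
      MulAction.IsPreprimitive.of_prime_card (by norm_num)
    refine Equiv.Perm.alternatingGroup_le_of_isPreprimitive_of_isThreeCycle_mem hprim
      (g := rO) ?_ hO
    rw [← card_support_eq_three_iff]
    decide
  · rw [Subgroup.closure_le]
    rintro σ (rfl | rfl | rfl | rfl) <;> (show Equiv.Perm.sign _ = 1; decide)

/-- The unit quaternion `cos(π m / n) + sin(π m / n) i`. -/
noncomputable def rotQ (n : ℕ) (m : ℤ) : ℍ[ℝ] :=
  ⟨Real.cos (Real.pi * m / n), Real.sin (Real.pi * m / n), 0, 0⟩

/-- `ζ_{2n}` as a unit quaternion. -/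
noncomputable def uZ (n : ℕ) : UnitQuat := ⟨zetaQ (2 * n), mem_unit (by simp [zetaQ])⟩

theorem binDih_eq (n : ℕ) : BinDihQ n = Subgroup.closure {uZ n, uJ} := by
  unfold BinDihQ
  congr 1
  ext x
  simp [Subtype.ext_iff, uZ, uJ]

theorem rot_mul (n : ℕ) (a b : ℤ) : rotQ n a * rotQ n b = rotQ n (a + b) := by
  have : Real.pi * (a + b : ℝ) / n = Real.pi * a / n + Real.pi * b / n := by ring
  ext <;> simp only [Quaternion.re_mul, Quaternion.imI_mul, Quaternion.imJ_mul, Quaternion.imK_mul] <;>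
    simp [rotQ, this, Real.cos_add, Real.sin_add] <;> ring

theorem rot_zero (n : ℕ) : rotQ n 0 = 1 := by
  ext <;> simp [rotQ]

theorem rot_self (n : ℕ) (hn : 2 ≤ n) : rotQ n n = -1 := by
  have : (n : ℝ) ≠ 0 := by positivity
  ext <;> simp [rotQ, this]

theorem rot_j (n : ℕ) (a : ℤ) : rotQ n a * jQ = jQ * rotQ n (-a) := by
  ext <;> simp only [Quaternion.re_mul, Quaternion.imI_mul, Quaternion.imJ_mul, Quaternion.imK_mul] <;>
    simp [rotQ, jQ, neg_div]

theorem j_j : jQ * jQ = -1 := by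
  ext <;> simp only [Quaternion.re_mul, Quaternion.imI_mul, Quaternion.imJ_mul, Quaternion.imK_mul] <;>
    simp [jQ]

/-- Description of the graph of `D*₄ₙ → Dₙ`. -/
def DihRel (n : ℕ) (q : ℍ[ℝ]) (σ : DihedralGroup n) : Prop :=
  ∃ m : ℤ, (σ = DihedralGroup.r m ∧ q = rotQ n m) ∨ (σ = DihedralGroup.sr m ∧ q = jQ * rotQ n m)

theorem dihRel_mul (n : ℕ) (hn : 2 ≤ n) {q q' : ℍ[ℝ]} {σ σ' : DihedralGroup n}
    (h : DihRel n q σ) (h' : DihRel n q' σ') : DihRel n (q * q') (σ * σ') := by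
  obtain ⟨a, ⟨rfl, rfl⟩ | ⟨rfl, rfl⟩⟩ := h <;> obtain ⟨b, ⟨rfl, rfl⟩ | ⟨rfl, rfl⟩⟩ := h'
  · exact ⟨a + b, Or.inl ⟨by simp, rot_mul n a b⟩⟩
  · refine ⟨b - a, Or.inr ⟨by simp, ?_⟩⟩
    rw [← mul_assoc, rot_j, mul_assoc, rot_mul]; congr 2; ring
  · exact ⟨a + b, Or.inr ⟨by simp, by rw [mul_assoc, rot_mul]⟩⟩
  · refine ⟨n + (b - a), Or.inl ⟨by simp, ?_⟩⟩
    rw [← rot_mul, rot_self n hn, mul_assoc, ← mul_assoc (rotQ n a), rot_j, mul_assoc, rot_mul,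
      ← mul_assoc, j_j]; congr 2; ring

theorem dihRel_inv (n : ℕ) (hn : 2 ≤ n) {q : ℍ[ℝ]} {σ : DihedralGroup n}
    (h : DihRel n q σ) : DihRel n q⁻¹ σ⁻¹ := by
  obtain ⟨a, ⟨rfl, rfl⟩ | ⟨rfl, rfl⟩⟩ := h
  · refine ⟨-a, Or.inl ⟨by simp, ?_⟩⟩
    apply inv_eq_of_mul_eq_one_right
    rw [rot_mul]; simp [rot_zero]
  · refine ⟨n + a, Or.inr ⟨by simp, ?_⟩⟩
    apply inv_eq_of_mul_eq_one_right
    rw [mul_assoc, ← mul_assoc (rotQ n a), rot_j, mul_assoc, rot_mul,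
      ← mul_assoc, j_j, show -a + (n + a) = (n : ℤ) by ring, rot_self n hn]
    simp

theorem dihRel_ker (n : ℕ) (hn : 2 ≤ n) {q : ℍ[ℝ]} {σ : DihedralGroup n}
    (h : DihRel n q σ) : (q = 1 ∨ q = -1) ↔ σ = 1 := by
  have hn0 : (n : ℝ) ≠ 0 := by positivity
  obtain ⟨a, ⟨rfl, rfl⟩ | ⟨rfl, rfl⟩⟩ := h
  · rw [DihedralGroup.one_def, DihedralGroup.r.injEq, ZMod.intCast_zmod_eq_zero_iff_dvd]
    constructor
    · intro h
      have hs : Real.sin (Real.pi * a / n) = 0 := by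
        rcases h with h | h <;> simpa [rotQ] using congrArg QuaternionAlgebra.imI h
      obtain ⟨k, hk⟩ := Real.sin_eq_zero_iff.1 hs
      refine ⟨k, ?_⟩
      have hpi := Real.pi_ne_zero
      field_simp at hk
      have : (a : ℝ) = n * k := by linarith
      exact_mod_cast this
    · rintro ⟨k, rfl⟩
      have hs : Real.pi * ((n * k : ℤ) : ℝ) / n = k * Real.pi := by
        push_cast; field_simp
      apply real_unit
      · apply mem_unit; simp [rotQ]
      · simp only [rotQ, hs]; simp [Real.sin_int_mul_pi]
  · constructor
    · intro h
      exfalso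
      have h1 : Real.cos (Real.pi * a / n) = 0 := by
        rcases h with h | h <;>
        · have h3 := congrArg QuaternionAlgebra.imJ h
          rw [Quaternion.imJ_mul] at h3
          simpa [rotQ, jQ] using h3
      have h2 : Real.sin (Real.pi * a / n) = 0 := by
        rcases h with h | h <;>
        · have h3 := congrArg QuaternionAlgebra.imK h
          rw [Quaternion.imK_mul] at h3
          simpa [rotQ, jQ] using h3
      have := Real.sin_sq_add_cos_sq (Real.pi * a / n)
      rw [h1, h2] at this
      norm_num at this
    · intro h
      rw [DihedralGroup.one_def] at h
      cases h

theorem clo_Dih (n : ℕ) :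
    (⊤ : Subgroup (DihedralGroup n)) = Subgroup.closure {DihedralGroup.r 1, DihedralGroup.sr 0} := by
  apply le_antisymm _ le_top
  have hr : ∀ i : ZMod n, DihedralGroup.r i ∈
      Subgroup.closure {(DihedralGroup.r 1 : DihedralGroup n), DihedralGroup.sr 0} := by
    intro i
    obtain ⟨m, rfl⟩ := ZMod.intCast_surjective i
    have := zpow_mem (K := Subgroup.closure {(DihedralGroup.r 1 : DihedralGroup n),
      DihedralGroup.sr 0}) (Subgroup.subset_closure (Or.inl rfl)) m
    simpa using this
  rintro (i | i) -
  · exact hr i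
  · have := mul_mem (Subgroup.subset_closure (show DihedralGroup.sr 0 ∈
      {(DihedralGroup.r 1 : DihedralGroup n), DihedralGroup.sr 0} from Or.inr rfl)) (hr i)
    simpa using this

theorem iso_dih (ρ : UnitQuat →* (W ≃ₗᵢ[ℝ] W))
    (hρ : ∀ (q : UnitQuat) (h : W),
      ((ρ q) h : ℍ[ℝ]) = (q : ℍ[ℝ]) * (h : ℍ[ℝ]) * (q : ℍ[ℝ])⁻¹) (n : ℕ) (hn : 2 ≤ n) :
    Nonempty (Subgroup.map ρ (BinDihQ n) ≃* (⊤ : Subgroup (DihedralGroup n))) := by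
  apply iso_of_graph ρ (Subgroup.closure
    {((uZ n, DihedralGroup.r 1) : UnitQuat × DihedralGroup n), (uJ, DihedralGroup.sr 0)})
  · rw [MonoidHom.map_closure, binDih_eq, Set.image_pair]; rfl
  · rw [MonoidHom.map_closure, clo_Dih, Set.image_pair]; rfl
  · intro p hp
    rw [ker_iff ρ hρ]
    apply dihRel_ker n hn
    induction hp using Subgroup.closure_induction with
    | mem x hx =>
      rcases hx with rfl | rfl
      · refine ⟨1, Or.inl ⟨by simp, ?_⟩⟩
        have : 2 * Real.pi / (2 * n) = Real.pi / n := by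
          rw [mul_div_mul_left _ _ two_ne_zero]
        ext <;> simp [uZ, zetaQ, rotQ, this]
      · exact ⟨0, Or.inr ⟨by simp, by simp [uJ, rot_zero]⟩⟩
    | one => exact ⟨0, Or.inl ⟨by simp, by simp [rot_zero]⟩⟩
    | mul x y _ _ hx hy => simpa using dihRel_mul n hn hx hy
    | inv x _ hx => simpa using dihRel_inv n hn hx

/-- Let `ρ` be the 2-to-1 homomorphism from the unit quaternions to the rotation group of
the purely imaginary quaternions `W`, given by `ρ(q) : h ↦ q h q⁻¹`. Then `ρ(D*₄ₙ)` is
isomorphic to the dihedral group of order `2n` (`n ≥ 2`), `ρ(T*) ≅ A₄`, `ρ(O*) ≅ S₄` and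
`ρ(I*) ≅ A₅`; moreover the kernel of the restriction of `ρ` to each of these subgroups is
`{1, -1}`, so each is a central extension by a group of order `2` of the dihedral,
tetrahedral, octahedral and icosahedral group respectively. -/
theorem stmt14 (ρ : UnitQuat →* (W ≃ₗᵢ[ℝ] W))
    (hρ : ∀ (q : UnitQuat) (h : W),
      ((ρ q) h : ℍ[ℝ]) = (q : ℍ[ℝ]) * (h : ℍ[ℝ]) * (q : ℍ[ℝ])⁻¹) :
    (∀ n : ℕ, 2 ≤ n → Nonempty (Subgroup.map ρ (BinDihQ n) ≃* DihedralGroup n)) ∧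
    Nonempty (Subgroup.map ρ BinTetQ ≃* alternatingGroup (Fin 4)) ∧
    Nonempty (Subgroup.map ρ BinOctQ ≃* Equiv.Perm (Fin 4)) ∧
    Nonempty (Subgroup.map ρ BinIcoQ ≃* alternatingGroup (Fin 5)) ∧
    (∀ n : ℕ, 2 ≤ n → ∀ x ∈ BinDihQ n,
      (ρ x = 1 ↔ ((x : ℍ[ℝ]) = 1 ∨ (x : ℍ[ℝ]) = -1))) ∧
    (∀ x ∈ BinTetQ, (ρ x = 1 ↔ ((x : ℍ[ℝ]) = 1 ∨ (x : ℍ[ℝ]) = -1))) ∧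
    (∀ x ∈ BinOctQ, (ρ x = 1 ↔ ((x : ℍ[ℝ]) = 1 ∨ (x : ℍ[ℝ]) = -1))) ∧
    (∀ x ∈ BinIcoQ, (ρ x = 1 ↔ ((x : ℍ[ℝ]) = 1 ∨ (x : ℍ[ℝ]) = -1))) := by
  have hk := ker_iff ρ hρ
  refine ⟨fun n hn => ?_, ?_, ?_, ?_, fun n _ x _ => hk x, fun x _ => hk x, fun x _ => hk x,
    fun x _ => hk x⟩
  · obtain ⟨e⟩ := iso_dih ρ hρ n hn
    exact ⟨e.trans Subgroup.topEquiv⟩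
  · refine iso_perm ρ hρ w4 {(uI, pI), (uJ, pJ), (uO, pO)} ?_ span4 inj4 _ _ ?_ ?_
    · rintro p (rfl | rfl | rfl)
      exacts [semI4, semJ4, semO4]
    · rw [binTet_eq]; simp [Set.image_insert_eq]
    · rw [clo_A4]; simp [Set.image_insert_eq]
  · have h := iso_perm ρ hρ w4 {(uI, pI), (uJ, pJ), (uO, pO), (uS, pS)} ?_ span4 inj4
      BinOctQ ⊤ ?_ ?_
    · obtain ⟨e⟩ := h
      exact ⟨e.trans Subgroup.topEquiv⟩
    · rintro p (rfl | rfl | rfl | rfl)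
      exacts [semI4, semJ4, semO4, semS4]
    · rw [binOct_eq]; simp [Set.image_insert_eq]
    · rw [clo_S4]; simp [Set.image_insert_eq]
  · refine iso_perm ρ hρ w5 {(uI, rI), (uJ, rJ), (uO, rO), (uT, rT)} ?_ span5 inj5 _ _ ?_ ?_
    · rintro p (rfl | rfl | rfl | rfl)
      exacts [semI5, semJ5, semO5, semT5]
    · rw [binIco_eq]; simp [Set.image_insert_eq]
    · rw [clo_A5]; simp [Set.image_insert_eq]
end
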